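/- arXiv:2004.01529 — 2 statements merged into one kernel-verified Lean document; each statement's English description precedes it below -/
import Mathlib

section
/- Let k ≥ 2 and r ≥ 0 be fixed integers and let n ≥ 3000·(r+1)³·(k+r)·k². Let δ ∈ [150k³(r+1)²/n, 1 − 150k³(r+1)³/n] ∪ {1} be such that M := Σ_{i=1}^{r} C(n−i, k−1) + δ·C(n−(r+1), k−1) is an integer. If F ⊆ C([n],k) has |F| = M and satisfies I(F) = MI(F), then, up to a permutation of [n], L_{n,k,1}^{(r)} ⊆ F ⊆ L_{n,k,1}^{(r+1)}. -/
open Finset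

/-- The total intersection of a family: `I(F) = ∑_{A∈F} ∑_{B∈F} |A ∩ B|`. -/
def totalInt (F : Finset (Finset ℕ)) : ℕ :=
  ∑ A ∈ F, ∑ B ∈ F, (A ∩ B).card

/-- The degree of a set `S` in the family `F`: the number of members of `F` containing `S`. -/
def degF (F : Finset (Finset ℕ)) (S : Finset ℕ) : ℕ :=
  (F.filter fun A => S ⊆ A).card

/-- `A` strictly precedes `B` in the lexicographic order on finite sets of positive integers:
the minimal element of the symmetric difference `A Δ B` belongs to `A`. -/
def lexLt (A B : Finset ℕ) : Prop :=
  ∃ m ∈ A \ B, ∀ x ∈ (A \ B) ∪ (B \ A), m ≤ x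

/-- `S` is an initial segment (prefix) of the `k`-element subsets of `[n] = {1,…,n}`
under the lexicographic order. -/
def IsLexPrefix (n k : ℕ) (S : Finset (Finset ℕ)) : Prop :=
  S ⊆ (Icc 1 n).powersetCard k ∧
    ∀ A ∈ S, ∀ B ∈ (Icc 1 n).powersetCard k, lexLt B A → B ∈ S

/-- The cardinality of the family `L_{n,k,t}^{(r)}`:
`C(n−t+1, k−t+1) − C(n−(t+r−1), k−t+1)`. -/
def lexStarCard (n k t r : ℕ) : ℕ :=
  (n - t + 1).choose (k - t + 1) - (n - (t + r - 1)).choose (k - t + 1)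

/-- The full `t`-star with core `Y`: all `k`-subsets of `[n]` containing `Y`. -/
def fullStar (n k : ℕ) (Y : Finset ℕ) : Finset (Finset ℕ) :=
  ((Icc 1 n).powersetCard k).filter fun A => Y ⊆ A

/-- The constant `C_s = 2^{2^{s−1}−1} · 10^{2^{s+2}−2} · (k² t⁴ (r+1)⁷)^{2^{s−1}}`. -/
def Cconst (k t r s : ℕ) : ℕ :=
  2 ^ (2 ^ (s - 1) - 1) * 10 ^ (2 ^ (s + 2) - 2) * (k ^ 2 * t ^ 4 * (r + 1) ^ 7) ^ (2 ^ (s - 1))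

/-!
Counting pairs by the vertices of the intersection gives `I(F) = ∑ d(x)²`, where `d(x)` is the
degree of `x` in `F`. Families of the same size have the same degree sum, so for any `q` an optimal
`F` also maximizes `∑ (d(x) - q)²`. Let `C` be the `r` vertices of largest degree, `v` the next
one, and `Hit(D)` the family of all `k`-sets that meet `D`; the lexicographic prefixes in question
are `Hit(C)` and `Hit(C ∪ {v})` once the vertices are sorted by degree.

Compare `F` with a family between `Hit(C)` and `Hit(C ∪ {v})`, with `q` the degree that `Hit(C)`
has outside `C`. Since only `C(n-2, k-2)` sets contain two given vertices, the members of `F` that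
evade `C ∪ {v}` contribute little to the sum of squares, and the comparison shows that they are
few. If there were one, some set meeting `C ∪ {v}` would be missing from `F`; it has a larger degree
sum than the evading member, so exchanging the two would increase `I`. Hence `F ⊆ Hit(C ∪ {v})`.
Repeating the comparison with `q` the degree that `Hit(C ∪ {v})` has outside `C ∪ {v}` shows that
all but few of the sets missing from `F` contain `v`. If one of them met `C`, exchanging it for a
member avoiding `C` would again increase `I`; hence `Hit(C) ⊆ F`.
-/

section VertexDegree

variable {α : Type*} [DecidableEq α] {𝒜 ℬ : Finset (Finset α)} {A B X Y D : Finset α} {x : α}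
  {k : ℕ}

/-- The degree of the vertex `x` in the set family `𝒜`: the number of members containing `x`. -/
def vertexDegree (𝒜 : Finset (Finset α)) (x : α) : ℕ :=
  #{A ∈ 𝒜 | x ∈ A}

lemma vertexDegree_mono (h : 𝒜 ⊆ ℬ) (x : α) : vertexDegree 𝒜 x ≤ vertexDegree ℬ x :=
  card_le_card (filter_subset_filter _ h)

lemma vertexDegree_le_card (𝒜 : Finset (Finset α)) (x : α) : vertexDegree 𝒜 x ≤ #𝒜 :=
  card_filter_le _ _

lemma vertexDegree_eq_zero (h : ∀ A ∈ 𝒜, x ∉ A) : vertexDegree 𝒜 x = 0 :=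
  card_eq_zero.2 (filter_eq_empty_iff.2 h)

lemma vertexDegree_eq_card (h : ∀ A ∈ 𝒜, x ∈ A) : vertexDegree 𝒜 x = #𝒜 :=
  congrArg card (filter_true_of_mem h)

lemma vertexDegree_union (h : Disjoint 𝒜 ℬ) (x : α) :
    vertexDegree (𝒜 ∪ ℬ) x = vertexDegree 𝒜 x + vertexDegree ℬ x := by
  simp only [vertexDegree, filter_union]
  exact card_union_of_disjoint (disjoint_filter_filter h)

lemma vertexDegree_insert (hA : A ∉ 𝒜) (x : α) :
    vertexDegree (insert A 𝒜) x = vertexDegree 𝒜 x + if x ∈ A then 1 else 0 := by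
  have : x ∈ A → A ∉ ({B ∈ 𝒜 | x ∈ B} : Finset _) := fun _ h ↦ hA (mem_filter.1 h).1
  split_ifs with hx <;> simp_all [vertexDegree, filter_insert]

lemma vertexDegree_filter_add_filter_not (𝒜 : Finset (Finset α)) (p : Finset α → Prop)
    [DecidablePred p] (x : α) :
    vertexDegree {A ∈ 𝒜 | p A} x + vertexDegree {A ∈ 𝒜 | ¬ p A} x = vertexDegree 𝒜 x := by
  rw [← vertexDegree_union (disjoint_filter_filter_not _ _ p), filter_union_filter_not_eq]

lemma vertexDegree_add_vertexDegree_sdiff (𝒜 ℬ : Finset (Finset α)) (x : α) :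
    vertexDegree 𝒜 x + vertexDegree (ℬ \ 𝒜) x = vertexDegree ℬ x + vertexDegree (𝒜 \ ℬ) x := by
  rw [← vertexDegree_union disjoint_sdiff, ← vertexDegree_union disjoint_sdiff,
    union_sdiff_self_eq_union, union_sdiff_self_eq_union, union_comm]

lemma sum_vertexDegree_nsmul {M : Type*} [AddCommMonoid M] (𝒜 : Finset (Finset α)) (Y : Finset α)
    (f : α → M) : ∑ x ∈ Y, vertexDegree 𝒜 x • f x = ∑ A ∈ 𝒜, ∑ x ∈ Y ∩ A, f x := by
  simp only [vertexDegree, ← sum_const]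
  exact sum_comm' fun x A ↦ by simp only [mem_filter, mem_inter]; tauto

lemma sum_vertexDegree (𝒜 : Finset (Finset α)) (Y : Finset α) :
    ∑ x ∈ Y, vertexDegree 𝒜 x = ∑ A ∈ 𝒜, #(Y ∩ A) := by
  simpa using sum_vertexDegree_nsmul 𝒜 Y fun _ ↦ (1 : ℕ)

lemma sum_vertexDegree_eq_mul_card (h𝒜 : 𝒜 ⊆ X.powersetCard k) :
    ∑ x ∈ X, vertexDegree 𝒜 x = k * #𝒜 := by
  rw [sum_vertexDegree, sum_const_nat, mul_comm]
  intro A hA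
  obtain ⟨hAX, hAk⟩ := mem_powersetCard.1 (h𝒜 hA)
  rw [inter_eq_right.2 hAX, hAk]

lemma sum_vertexDegree_le (h𝒜 : 𝒜 ⊆ X.powersetCard k) (hY : Y ⊆ X) :
    ∑ x ∈ Y, (vertexDegree 𝒜 x : ℝ) ≤ k * #𝒜 := by
  exact_mod_cast (sum_le_sum_of_subset hY).trans_eq (sum_vertexDegree_eq_mul_card h𝒜)

lemma card_le_sum_vertexDegree (h : ∀ A ∈ 𝒜, ¬ Disjoint A D) :
    #𝒜 ≤ ∑ x ∈ D, vertexDegree 𝒜 x := by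
  rw [sum_vertexDegree, card_eq_sum_ones]
  refine sum_le_sum fun A hA ↦ card_pos.2 ?_
  rw [inter_comm]
  exact not_disjoint_iff_nonempty_inter.1 (h A hA)

lemma sum_sq_vertexDegree (h𝒜 : 𝒜 ⊆ X.powersetCard k) :
    ∑ x ∈ X, vertexDegree 𝒜 x ^ 2 = ∑ A ∈ 𝒜, ∑ x ∈ A, vertexDegree 𝒜 x := by
  simp only [sq, ← smul_eq_mul]
  rw [sum_vertexDegree_nsmul]
  refine sum_congr rfl fun A hA ↦ ?_
  rw [inter_eq_right.2 (mem_powersetCard.1 (h𝒜 hA)).1]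

lemma totalInt_eq_sum_sq_vertexDegree {X : Finset ℕ} {F : Finset (Finset ℕ)}
    (hF : F ⊆ X.powersetCard k) : totalInt F = ∑ x ∈ X, vertexDegree F x ^ 2 := by
  rw [sum_sq_vertexDegree hF]
  exact sum_congr rfl fun A _ ↦ (sum_vertexDegree F A).symm

lemma sum_sq_vertexDegree_insert (hB : B ∉ 𝒜) (hBX : B ⊆ X) :
    ∑ x ∈ X, vertexDegree (insert B 𝒜) x ^ 2 =
      ∑ x ∈ X, vertexDegree 𝒜 x ^ 2 + 2 * ∑ x ∈ B, vertexDegree 𝒜 x + #B := by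
  have expand (x : α) : vertexDegree (insert B 𝒜) x ^ 2 =
      vertexDegree 𝒜 x ^ 2 + if x ∈ B then 2 * vertexDegree 𝒜 x + 1 else 0 := by
    rw [vertexDegree_insert hB]
    split_ifs <;> ring
  simp only [expand, sum_add_distrib, sum_ite_mem, inter_eq_right.2 hBX, mul_sum, card_eq_sum_ones,
    add_assoc]

/-- The number of `k`-subsets of an `n`-set that contain two given vertices. -/
def pairCard (n k : ℕ) : ℕ :=
  (n - 2).choose (k - 2)

lemma vertexDegree_filter_mem_le (h𝒜 : 𝒜 ⊆ X.powersetCard k) (hk : 2 ≤ k) {y : α} (hxy : x ≠ y) :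
    vertexDegree {A ∈ 𝒜 | x ∈ A} y ≤ pairCard #X k := by
  have hpair : ({A ∈ {A ∈ 𝒜 | x ∈ A} | y ∈ A} : Finset _) ⊆
      {A ∈ X.powersetCard k | {x, y} ⊆ A} := fun A hA ↦ by
    simp only [mem_filter, insert_subset_iff, singleton_subset_iff] at hA ⊢
    exact ⟨h𝒜 hA.1.1, hA.1.2, hA.2⟩
  refine (card_le_card hpair).trans ?_
  by_cases hX : {x, y} ⊆ X
  · rw [← card_pair hxy] at hk
    rw [card_filter_powersetCard_subset _ _ _ hX hk, card_pair hxy, pairCard]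
  · rw [card_eq_zero.2 (filter_eq_empty_iff.2 fun A hA h ↦
      hX (h.trans (mem_powersetCard.1 hA).1))]
    exact Nat.zero_le _

lemma sum_filter_mem_sum_vertexDegree_le (h𝒜 : 𝒜 ⊆ X.powersetCard k) (hk : 2 ≤ k) (hx : x ∈ X) :
    ∑ A ∈ 𝒜 with x ∈ A, ∑ y ∈ A, vertexDegree 𝒜 y ≤
      vertexDegree 𝒜 x ^ 2 + pairCard #X k * (k * #𝒜) := by
  have hself : vertexDegree {A ∈ 𝒜 | x ∈ A} x = vertexDegree 𝒜 x :=
    vertexDegree_eq_card fun A hA ↦ (mem_filter.1 hA).2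
  calc ∑ A ∈ 𝒜 with x ∈ A, ∑ y ∈ A, vertexDegree 𝒜 y
      = ∑ A ∈ 𝒜 with x ∈ A, ∑ y ∈ X ∩ A, vertexDegree 𝒜 y := by
        refine sum_congr rfl fun A hA ↦ ?_
        rw [inter_eq_right.2 (mem_powersetCard.1 (h𝒜 (mem_filter.1 hA).1)).1]
    _ = ∑ y ∈ X, vertexDegree {A ∈ 𝒜 | x ∈ A} y * vertexDegree 𝒜 y :=
        (sum_vertexDegree_nsmul _ _ _).symm
    _ = vertexDegree 𝒜 x ^ 2 +
          ∑ y ∈ X.erase x, vertexDegree {A ∈ 𝒜 | x ∈ A} y * vertexDegree 𝒜 y := by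
        rw [← add_sum_erase _ _ hx, hself, sq]
    _ ≤ vertexDegree 𝒜 x ^ 2 + ∑ y ∈ X.erase x, pairCard #X k * vertexDegree 𝒜 y := by
        gcongr with y hy
        exact vertexDegree_filter_mem_le h𝒜 hk (ne_of_mem_erase hy).symm
    _ ≤ vertexDegree 𝒜 x ^ 2 + pairCard #X k * (k * #𝒜) := by
        rw [← mul_sum, ← sum_vertexDegree_eq_mul_card h𝒜]
        gcongr
        exact erase_subset _ _

lemma sum_sq_sum_vertexDegree_le (h𝒜 : 𝒜 ⊆ X.powersetCard k) (hk : 2 ≤ k) :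
    ∑ A ∈ 𝒜, (∑ x ∈ A, vertexDegree 𝒜 x) ^ 2 ≤
      ∑ x ∈ X, vertexDegree 𝒜 x ^ 3 + pairCard #X k * (k * #𝒜) ^ 2 := by
  calc ∑ A ∈ 𝒜, (∑ x ∈ A, vertexDegree 𝒜 x) ^ 2
      = ∑ A ∈ 𝒜, ∑ x ∈ A, vertexDegree 𝒜 x * ∑ y ∈ A, vertexDegree 𝒜 y := by
        simp only [sq, sum_mul]
    _ = ∑ x ∈ X, vertexDegree 𝒜 x * ∑ A ∈ 𝒜 with x ∈ A, ∑ y ∈ A, vertexDegree 𝒜 y := by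
        simp only [mul_sum (f := fun A ↦ ∑ y ∈ A, vertexDegree 𝒜 y)]
        refine sum_comm' fun A x ↦ ?_
        simp only [mem_filter]
        exact ⟨fun h ↦ ⟨h, (mem_powersetCard.1 (h𝒜 h.1)).1 h.2⟩, And.left⟩
    _ ≤ ∑ x ∈ X, vertexDegree 𝒜 x * (vertexDegree 𝒜 x ^ 2 + pairCard #X k * (k * #𝒜)) := by
        gcongr with x hx
        exact sum_filter_mem_sum_vertexDegree_le h𝒜 hk hx
    _ = ∑ x ∈ X, vertexDegree 𝒜 x ^ 3 + pairCard #X k * (k * #𝒜) ^ 2 := by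
        simp only [mul_add, sum_add_distrib, ← sum_mul, sum_vertexDegree_eq_mul_card h𝒜]
        ring_nf

lemma sum_sq_vertexDegree_le (h𝒜 : 𝒜 ⊆ X.powersetCard k) (hk : 2 ≤ k) {φ γ : ℝ} (hφ₀ : 0 ≤ φ)
    (hγ₀ : 0 ≤ γ) (hφ : ∀ x ∈ X, (vertexDegree 𝒜 x : ℝ) ≤ φ)
    (hγ : (k : ℝ) ^ 2 * pairCard #X k * #𝒜 ≤ γ ^ 2) :
    ∑ x ∈ X, (vertexDegree 𝒜 x : ℝ) ^ 2 ≤ (φ + γ) * #𝒜 := by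
  set T := ∑ x ∈ X, (vertexDegree 𝒜 x : ℝ) ^ 2 with hT
  have hT_eq : T = ∑ A ∈ 𝒜, ∑ x ∈ A, (vertexDegree 𝒜 x : ℝ) := by
    rw [hT]
    exact_mod_cast sum_sq_vertexDegree h𝒜
  have hcubes : ∑ x ∈ X, (vertexDegree 𝒜 x : ℝ) ^ 3 ≤ φ * T := by
    rw [hT, mul_sum]
    refine sum_le_sum fun x hx ↦ ?_
    rw [pow_succ']
    exact mul_le_mul_of_nonneg_right (hφ x hx) (sq_nonneg _)
  have hsq : T ^ 2 ≤ φ * #𝒜 * T + (γ * #𝒜) ^ 2 :=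
    calc T ^ 2 ≤ #𝒜 * ∑ A ∈ 𝒜, (∑ x ∈ A, (vertexDegree 𝒜 x : ℝ)) ^ 2 :=
          hT_eq ▸ sq_sum_le_card_mul_sum_sq
      _ ≤ #𝒜 * (∑ x ∈ X, (vertexDegree 𝒜 x : ℝ) ^ 3 + pairCard #X k * (k * #𝒜) ^ 2) := by
          gcongr
          exact_mod_cast sum_sq_sum_vertexDegree_le h𝒜 hk
      _ ≤ #𝒜 * (φ * T + pairCard #X k * (k * #𝒜) ^ 2) := by gcongr
      _ = φ * #𝒜 * T + (k : ℝ) ^ 2 * pairCard #X k * #𝒜 * (#𝒜 : ℝ) ^ 2 := by ring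
      _ ≤ φ * #𝒜 * T + γ ^ 2 * (#𝒜 : ℝ) ^ 2 := by gcongr
      _ = φ * #𝒜 * T + (γ * #𝒜) ^ 2 := by rw [mul_pow]
  have hφ_card : 0 ≤ φ * #𝒜 := by positivity
  have hγ_card : 0 ≤ γ * #𝒜 := by positivity
  nlinarith

end VertexDegree

section Maximal

variable {α : Type*} [DecidableEq α] {F G : Finset (Finset α)} {A B X : Finset α} {k : ℕ}

/-- `F` maximizes the sum of the squared vertex degrees among the families of `#F` many
`k`-subsets of `X`. For families of sets of natural numbers this sum is `totalInt`. -/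
structure IsSqDegreeMaximal (X : Finset α) (k : ℕ) (F : Finset (Finset α)) : Prop where
  subset : F ⊆ X.powersetCard k
  sum_le : ∀ G ⊆ X.powersetCard k, #G = #F →
    ∑ x ∈ X, vertexDegree G x ^ 2 ≤ ∑ x ∈ X, vertexDegree F x ^ 2

lemma isSqDegreeMaximal_of_totalInt_le {X : Finset ℕ} {F : Finset (Finset ℕ)}
    (hF : F ⊆ X.powersetCard k)
    (hmax : ∀ G ⊆ X.powersetCard k, #G = #F → totalInt G ≤ totalInt F) :
    IsSqDegreeMaximal X k F where
  subset := hF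
  sum_le G hG hcard := by
    rw [← totalInt_eq_sum_sq_vertexDegree hG, ← totalInt_eq_sum_sq_vertexDegree hF]
    exact hmax G hG hcard

lemma sum_sq_vertexDegree_sub (hF : F ⊆ X.powersetCard k) (q : ℝ) :
    ∑ x ∈ X, ((vertexDegree F x : ℝ) - q) ^ 2 =
      ∑ x ∈ X, (vertexDegree F x : ℝ) ^ 2 - 2 * q * (k * #F) + #X * q ^ 2 := by
  have hdeg : ∑ x ∈ X, (vertexDegree F x : ℝ) = k * #F := by
    exact_mod_cast sum_vertexDegree_eq_mul_card hF
  simp only [sub_sq, sum_add_distrib, sum_sub_distrib, sum_const, nsmul_eq_mul, ← sum_mul,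
    ← mul_sum, hdeg]
  ring

-- The degree sum is `k * #F` for both families, so the squares may be centred at any `q`.
lemma IsSqDegreeMaximal.sum_sq_sub_le (hF : IsSqDegreeMaximal X k F) (hG : G ⊆ X.powersetCard k)
    (hcard : #G = #F) (q : ℝ) :
    ∑ x ∈ X, ((vertexDegree G x : ℝ) - q) ^ 2 ≤ ∑ x ∈ X, ((vertexDegree F x : ℝ) - q) ^ 2 := by
  have hmax : ∑ x ∈ X, (vertexDegree G x : ℝ) ^ 2 ≤ ∑ x ∈ X, (vertexDegree F x : ℝ) ^ 2 := by
    exact_mod_cast hF.sum_le G hG hcard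
  rw [sum_sq_vertexDegree_sub hG, sum_sq_vertexDegree_sub hF.subset, hcard]
  gcongr

lemma IsSqDegreeMaximal.sum_vertexDegree_lt (hF : IsSqDegreeMaximal X k F) (hA : A ∈ F)
    (hB : B ∈ X.powersetCard k) (hBF : B ∉ F) :
    ∑ x ∈ B, vertexDegree F x < ∑ x ∈ A, vertexDegree F x := by
  obtain ⟨hAX, hAk⟩ := mem_powersetCard.1 (hF.subset hA)
  obtain ⟨hBX, hBk⟩ := mem_powersetCard.1 hB
  set E := F.erase A
  have hAE : A ∉ E := notMem_erase A F
  have hF_eq : insert A E = F := insert_erase hA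
  have hBE : B ∉ E := fun h ↦ hBF (mem_of_mem_erase h)
  have hexch := hF.sum_le (insert B E)
    (insert_subset hB ((erase_subset _ _).trans hF.subset))
    (by rw [card_insert_of_notMem hBE, ← hF_eq, card_insert_of_notMem hAE])
  rw [← hF_eq, sum_sq_vertexDegree_insert hBE hBX, sum_sq_vertexDegree_insert hAE hAX, hAk, hBk]
    at hexch
  have hAB : #(B ∩ A) < #A := by
    refine card_lt_card (inter_subset_right.ssubset_of_ne fun h ↦ hBF ?_)
    rwa [← eq_of_subset_of_card_le (inter_eq_right.1 h) (hBk.trans hAk.symm).le]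
  simp only [← hF_eq, vertexDegree_insert hAE, sum_add_distrib, sum_ite_mem, inter_self, sum_const,
    smul_eq_mul, mul_one]
  omega

end Maximal

section HittingFamily

variable {α : Type*} [DecidableEq α] {F : Finset (Finset α)} {A C D X : Finset α} {v x : α}
  {k m : ℕ}

/-- The `k`-subsets of `X` that meet `D`: the union of the full stars centred at the elements
of `D`. -/
def hittingFamily (X : Finset α) (k : ℕ) (D : Finset α) : Finset (Finset α) :=
  {A ∈ X.powersetCard k | ¬ Disjoint A D}

/-- The number of `k`-subsets of an `n`-set that contain a given vertex and avoid `s` given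
others. -/
def starCard (n k s : ℕ) : ℕ :=
  (n - (s + 1)).choose (k - 1)

/-- The number of `k`-subsets of an `n`-set that contain a given vertex and meet a given `s`-set
not containing it. -/
def outerDegree (n k s : ℕ) : ℕ :=
  starCard n k 0 - starCard n k s

lemma starCard_antitone (n k : ℕ) : Antitone (starCard n k) := fun _ _ h ↦
  Nat.choose_le_choose _ (by omega)

lemma starCard_add_outerDegree (n k s : ℕ) : starCard n k s + outerDegree n k s = starCard n k 0 :=
  Nat.add_sub_of_le (starCard_antitone n k s.zero_le)

lemma starCard_le_starCard_succ_add (hk : 2 ≤ k) (n s : ℕ) :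
    starCard n k s ≤ starCard n k (s + 1) + pairCard n k := by
  obtain ⟨k, rfl⟩ := Nat.exists_eq_add_of_le' hk
  cases hj : n - (s + 1) with
  | zero => simp [starCard, hj]
  | succ j =>
    have hj' : n - (s + 2) = j := by omega
    have : j.choose k ≤ (n - 2).choose k := Nat.choose_le_choose _ (by omega)
    simp only [starCard, pairCard, hj, hj', add_assoc, Nat.reduceAdd, Nat.add_succ_sub_one,
      Nat.choose_succ_succ', Nat.add_sub_cancel]
    omega

lemma outerDegree_le (hk : 2 ≤ k) (n s : ℕ) : outerDegree n k s ≤ s * pairCard n k := by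
  refine Nat.sub_le_iff_le_add'.2 ?_
  induction s with
  | zero => simp
  | succ s ih =>
    rw [add_one_mul]
    have := starCard_le_starCard_succ_add hk n s
    omega

lemma thousand_mul_outerDegree_le {n s : ℕ} (hk : 2 ≤ k)
    (hN : 1000 * (s + 1) * k * (k + s) * pairCard n k ≤ starCard n k 0) :
    1000 * (k * outerDegree n k s) ≤ starCard n k 0 := by
  have : k * outerDegree n k s ≤ (s + 1) * k * (k + s) * pairCard n k :=
    calc k * outerDegree n k s
      _ ≤ k * (s * pairCard n k) := Nat.mul_le_mul_left k (outerDegree_le hk _ _)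
      _ = 1 * k * s * pairCard n k := by ring
      _ ≤ (s + 1) * k * (k + s) * pairCard n k := by gcongr <;> omega
  linarith

lemma outerDegree_le_starCard {n s : ℕ} (hk : 2 ≤ k)
    (hN : 1000 * (s + 1) * k * (k + s) * pairCard n k ≤ starCard n k 0) :
    outerDegree n k s ≤ starCard n k s := by
  have hkQ := thousand_mul_outerDegree_le hk hN
  have := starCard_add_outerDegree n k s
  have := Nat.le_mul_of_pos_left (outerDegree n k s) (by omega : 0 < k)
  omega

lemma thousand_mul_pairCard_add_outerDegree_le {n s : ℕ} (hk : 2 ≤ k)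
    (hN : 1000 * (s + 1) * k * (k + s) * pairCard n k ≤ starCard n k 0) :
    1000 * (2 * k * pairCard n k + outerDegree n k s) ≤ starCard n k 0 := by
  have : 2 * k * pairCard n k + outerDegree n k s ≤ (s + 1) * k * (k + s) * pairCard n k :=
    calc 2 * k * pairCard n k + outerDegree n k s
      _ ≤ 2 * k * pairCard n k + s * pairCard n k := Nat.add_le_add_left (outerDegree_le hk _ _) _
      _ = 1 * (2 * k + 1 * s) * pairCard n k := by ring
      _ ≤ (s + 1) * (k * k + k * s) * pairCard n k := by gcongr <;> omega
      _ = (s + 1) * k * (k + s) * pairCard n k := by ring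
  linarith

lemma mem_hittingFamily : A ∈ hittingFamily X k D ↔ A ∈ X.powersetCard k ∧ ¬ Disjoint A D :=
  mem_filter

lemma hittingFamily_subset (X : Finset α) (k : ℕ) (D : Finset α) :
    hittingFamily X k D ⊆ X.powersetCard k :=
  filter_subset _ _

lemma hittingFamily_mono (X : Finset α) (k : ℕ) : Monotone (hittingFamily X k) := fun _ _ h ↦
  monotone_filter_right _ fun _ _ hA hdisj ↦ hA (hdisj.mono_right h)

lemma filter_disjoint_powersetCard (X : Finset α) (k : ℕ) (D : Finset α) :
    {A ∈ X.powersetCard k | Disjoint A D} = (X \ D).powersetCard k := by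
  ext A
  simp only [mem_filter, mem_powersetCard, subset_sdiff]
  tauto

lemma card_hittingFamily_add (hD : D ⊆ X) :
    #(hittingFamily X k D) + (#X - #D).choose k = (#X).choose k := by
  have h := card_filter_add_card_filter_not (s := X.powersetCard k) (Disjoint · D)
  rwa [filter_disjoint_powersetCard, card_powersetCard, card_powersetCard, card_sdiff_of_subset hD,
    add_comm] at h

lemma card_hittingFamily_insert (hk : 1 ≤ k) (hD : D ⊆ X) (hx : x ∈ X) (hxD : x ∉ D) :
    #(hittingFamily X k (insert x D)) = #(hittingFamily X k D) + starCard #X k #D := by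
  have hDx : insert x D ⊆ X := insert_subset hx hD
  have hcard := card_hittingFamily_add (k := k) hD
  have hcard_insert := card_hittingFamily_add (k := k) hDx
  have hlt := card_le_card hDx
  rw [card_insert_of_notMem hxD] at hcard_insert hlt
  obtain ⟨k, rfl⟩ := Nat.exists_eq_add_of_le' hk
  rw [show #X - #D = #X - (#D + 1) + 1 by omega, Nat.choose_succ_succ'] at hcard
  rw [starCard, Nat.add_sub_cancel]
  omega

lemma card_hittingFamily (hk : 1 ≤ k) (hD : D ⊆ X) :
    #(hittingFamily X k D) = ∑ i ∈ Icc 1 #D, (#X - i).choose (k - 1) := by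
  induction D using Finset.induction_on with
  | empty => simp [hittingFamily]
  | insert x D hxD ih =>
    obtain ⟨hx, hD⟩ := insert_subset_iff.1 hD
    rw [card_hittingFamily_insert hk hD hx hxD, card_insert_of_notMem hxD,
      sum_Icc_succ_top (by omega), ih hD, starCard]

lemma vertexDegree_powersetCard (hk : 1 ≤ k) (hx : x ∈ X) :
    vertexDegree (X.powersetCard k) x = starCard #X k 0 := by
  simpa [vertexDegree, starCard] using
    card_filter_powersetCard_subset {x} X k (singleton_subset_iff.2 hx) hk

lemma vertexDegree_hittingFamily_add (X : Finset α) (k : ℕ) (D : Finset α) (x : α) :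
    vertexDegree (hittingFamily X k D) x + vertexDegree ((X \ D).powersetCard k) x =
      vertexDegree (X.powersetCard k) x := by
  rw [← filter_disjoint_powersetCard, add_comm]
  exact vertexDegree_filter_add_filter_not _ _ x

lemma vertexDegree_hittingFamily_of_mem (hk : 1 ≤ k) (hD : D ⊆ X) (hx : x ∈ D) :
    vertexDegree (hittingFamily X k D) x = starCard #X k 0 := by
  rw [← vertexDegree_powersetCard hk (hD hx), ← vertexDegree_hittingFamily_add X k D,
    vertexDegree_eq_zero fun A hA h ↦ (mem_sdiff.1 ((mem_powersetCard.1 hA).1 h)).2 hx, add_zero]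

lemma vertexDegree_hittingFamily_of_notMem (hk : 1 ≤ k) (hD : D ⊆ X) (hx : x ∈ X) (hxD : x ∉ D) :
    vertexDegree (hittingFamily X k D) x = outerDegree #X k #D := by
  have h := vertexDegree_hittingFamily_add X k D x
  have hstar : starCard #(X \ D) k 0 = starCard #X k #D := by
    rw [starCard, starCard, card_sdiff_of_subset hD, zero_add, Nat.sub_sub]
  rw [vertexDegree_powersetCard hk hx, vertexDegree_powersetCard hk (mem_sdiff.2 ⟨hx, hxD⟩),
    hstar, ← starCard_add_outerDegree _ _ #D] at h
  omega

lemma disjoint_of_mem_sdiff_hittingFamily (hF : F ⊆ X.powersetCard k)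
    (hA : A ∈ F \ hittingFamily X k D) : Disjoint A D := by
  rw [mem_sdiff, mem_hittingFamily] at hA
  by_contra h
  exact hA.2 ⟨hF hA.1, h⟩

lemma vertexDegree_add_of_mem (hF : F ⊆ X.powersetCard k) (hk : 1 ≤ k) (hD : D ⊆ X) (hx : x ∈ D) :
    vertexDegree F x + vertexDegree (hittingFamily X k D \ F) x = starCard #X k 0 := by
  rw [vertexDegree_add_vertexDegree_sdiff, vertexDegree_hittingFamily_of_mem hk hD hx,
    vertexDegree_eq_zero fun A hA h ↦
      disjoint_left.1 (disjoint_of_mem_sdiff_hittingFamily hF hA) h hx, add_zero]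

lemma vertexDegree_add_of_notMem (hk : 1 ≤ k) (hD : D ⊆ X) (hx : x ∈ X) (hxD : x ∉ D) :
    vertexDegree F x + vertexDegree (hittingFamily X k D \ F) x =
      outerDegree #X k #D + vertexDegree (F \ hittingFamily X k D) x := by
  rw [vertexDegree_add_vertexDegree_sdiff, vertexDegree_hittingFamily_of_notMem hk hD hx hxD]

lemma exists_subset_card_hittingFamily_add (hk : 1 ≤ k) (hC : C ⊆ X) (hv : v ∈ X) (hvC : v ∉ C)
    (hm : m ≤ starCard #X k #C) :
    ∃ G ⊆ X.powersetCard k, #G = #(hittingFamily X k C) + m ∧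
      (∀ i ∈ C, vertexDegree G i = starCard #X k 0) ∧
      vertexDegree G v = outerDegree #X k #C + m := by
  obtain ⟨G, hCG, hGD, hG⟩ := exists_subsuperset_card_eq
    (hittingFamily_mono X k (subset_insert v C)) (Nat.le_add_right _ m)
    (by rw [card_hittingFamily_insert hk hC hv hvC]; omega)
  have hGX := hGD.trans (hittingFamily_subset X k _)
  have hnew {A} (hA : A ∈ G \ hittingFamily X k C) : v ∈ A := by
    have hAC := disjoint_of_mem_sdiff_hittingFamily hGX hA
    have hAD := (mem_hittingFamily.1 (hGD (mem_sdiff.1 hA).1)).2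
    by_contra hvA
    exact hAD (disjoint_insert_right.2 ⟨hvA, hAC⟩)
  have hmissing : hittingFamily X k C \ G = ∅ := sdiff_eq_empty_iff_subset.2 hCG
  refine ⟨G, hGX, hG, fun i hi ↦ ?_, ?_⟩
  · simpa [hmissing, vertexDegree] using vertexDegree_add_of_mem hGX hk hC hi
  · have h := vertexDegree_add_of_notMem (F := G) hk hC hv hvC
    rw [vertexDegree_eq_card fun A ↦ hnew, card_sdiff_of_subset hCG, hG] at h
    simpa [hmissing, vertexDegree] using h

lemma IsSqDegreeMaximal.le_sum_sq_sub (hF : IsSqDegreeMaximal X k F) (hk : 1 ≤ k) (hC : C ⊆ X)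
    (hv : v ∈ X) (hvC : v ∉ C) (hcard : #F = #(hittingFamily X k C) + m)
    (hm : m ≤ starCard #X k #C) (q : ℝ) :
    #C * (starCard #X k 0 - q) ^ 2 + (outerDegree #X k #C + m - q) ^ 2 ≤
      ∑ x ∈ X, ((vertexDegree F x : ℝ) - q) ^ 2 := by
  obtain ⟨G, hGX, hG, hGC, hGv⟩ := exists_subset_card_hittingFamily_add hk hC hv hvC hm
  calc #C * (starCard #X k 0 - q) ^ 2 + (outerDegree #X k #C + m - q) ^ 2
      = ∑ x ∈ insert v C, ((vertexDegree G x : ℝ) - q) ^ 2 := by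
        rw [sum_insert hvC, sum_congr rfl fun i hi ↦ by rw [hGC i hi], hGv]
        simp [add_comm]
    _ ≤ ∑ x ∈ X, ((vertexDegree G x : ℝ) - q) ^ 2 :=
        sum_le_sum_of_subset_of_nonneg (insert_subset hv hC) fun _ _ _ ↦ sq_nonneg _
    _ ≤ ∑ x ∈ X, ((vertexDegree F x : ℝ) - q) ^ 2 := hF.sum_sq_sub_le hGX (hG.trans hcard.symm) q

end HittingFamily

/-- `C` consists of vertices of `X` of largest value under `d`, and `v` comes next. -/
structure IsTopDegree {α : Type*} (X C : Finset α) (v : α) (d : α → ℕ) : Prop where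
  subset : C ⊆ X
  mem : v ∈ X
  notMem : v ∉ C
  le_of_mem : ∀ i ∈ C, d v ≤ d i
  le_of_notMem : ∀ x ∈ X, x ∉ C → d x ≤ d v

section EvadingMembers

variable {α : Type*} [DecidableEq α] {F : Finset (Finset α)} {C X : Finset α} {v x : α} {k m : ℕ}

-- `𝓗`: the sets missing from `F`; `𝓥`, `𝓔`: the excess members through `v` and evading `v`.
local notation "𝓗" => hittingFamily X k C \ F
local notation "𝓥" => filter (fun A ↦ v ∈ A) (F \ hittingFamily X k C)
local notation "𝓔" => filter (fun A ↦ v ∉ A) (F \ hittingFamily X k C)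

lemma vertexDegree_missing_le (hk : 1 ≤ k) (hC : C ⊆ X) (hx : x ∈ X) (hxC : x ∉ C) :
    vertexDegree 𝓗 x ≤ outerDegree #X k #C :=
  (vertexDegree_mono sdiff_subset x).trans_eq (vertexDegree_hittingFamily_of_notMem hk hC hx hxC)

lemma vertexDegree_add_missing (hk : 1 ≤ k) (hC : C ⊆ X) (hx : x ∈ X) (hxC : x ∉ C) :
    vertexDegree F x + vertexDegree 𝓗 x =
      outerDegree #X k #C + vertexDegree 𝓥 x + vertexDegree 𝓔 x := by
  rw [vertexDegree_add_of_notMem hk hC hx hxC, add_assoc, vertexDegree_filter_add_filter_not]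

lemma vertexDegree_add_missing_self (hk : 1 ≤ k) (hC : C ⊆ X) (hv : v ∈ X) (hvC : v ∉ C) :
    vertexDegree F v + vertexDegree 𝓗 v = outerDegree #X k #C + #𝓥 :=
  vertexDegree_add_of_notMem hk hC hv hvC

lemma card_add_card_missing (hcard : #F = #(hittingFamily X k C) + m) :
    m + #𝓗 = #𝓥 + #𝓔 := by
  rw [card_filter_add_card_filter_not]
  have := card_sdiff_add_card F (hittingFamily X k C)
  have := card_sdiff_add_card (hittingFamily X k C) F
  rw [union_comm] at this
  omega

lemma card_through_le (hF : F ⊆ X.powersetCard k) (hk : 1 ≤ k) (hC : C ⊆ X) (hv : v ∈ X)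
    (hvC : v ∉ C) : #𝓥 ≤ starCard #X k #C := by
  have hsub : 𝓥 ⊆ hittingFamily X k (insert v C) \ hittingFamily X k C := fun A hA ↦ by
    obtain ⟨hA, hvA⟩ := mem_filter.1 hA
    obtain ⟨hAF, hAC⟩ := mem_sdiff.1 hA
    exact mem_sdiff.2 ⟨mem_hittingFamily.2
      ⟨hF hAF, not_disjoint_iff.2 ⟨v, hvA, mem_insert_self v C⟩⟩, hAC⟩
  have := card_le_card hsub
  rwa [card_sdiff_of_subset (hittingFamily_mono X k (subset_insert v C)),
    card_hittingFamily_insert hk hC hv hvC, Nat.add_sub_cancel_left] at this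

lemma card_sdiff_hittingFamily_le (hk : 1 ≤ k) (hC : C ⊆ X)
    (hcard : #F = #(hittingFamily X k C) + m) (hm : m ≤ starCard #X k #C) :
    #(F \ hittingFamily X k C) ≤ (#C + 1) * starCard #X k 0 := by
  have hHit : #(hittingFamily X k C) ≤ #C * starCard #X k 0 := by
    have := card_le_sum_vertexDegree fun A (hA : A ∈ hittingFamily X k C) ↦
      (mem_hittingFamily.1 hA).2
    rwa [sum_congr rfl fun i hi ↦ vertexDegree_hittingFamily_of_mem hk hC hi, sum_const,
      smul_eq_mul] at this
  have := starCard_antitone #X k (Nat.zero_le #C)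
  have := card_le_card (sdiff_subset (s := F) (t := hittingFamily X k C))
  rw [add_one_mul]
  omega

lemma sum_core_sq_sub_le (hF : F ⊆ X.powersetCard k) (hk : 1 ≤ k)
    (htop : IsTopDegree X C v (vertexDegree F))
    (hQ : outerDegree #X k #C ≤ starCard #X k #C) :
    ∑ x ∈ C, ((vertexDegree F x : ℝ) - outerDegree #X k #C) ^ 2 ≤
      #C * (starCard #X k #C : ℝ) ^ 2 -
        #𝓗 * (starCard #X k #C + #𝓥 - outerDegree #X k #C) := by
  have hN := starCard_add_outerDegree #X k #C
  have hQ' : (outerDegree #X k #C : ℝ) ≤ starCard #X k #C := by exact_mod_cast hQ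
  have hpoint (i) (hi : i ∈ C) : ((vertexDegree F i : ℝ) - outerDegree #X k #C) ^ 2 ≤
      (starCard #X k #C : ℝ) ^ 2 -
        vertexDegree 𝓗 i * (starCard #X k #C + #𝓥 - outerDegree #X k #C) := by
    have hi_deg : (vertexDegree F i : ℝ) + vertexDegree 𝓗 i =
        starCard #X k #C + outerDegree #X k #C := by
      exact_mod_cast (vertexDegree_add_of_mem hF hk htop.subset hi).trans hN.symm
    have hv_deg : #𝓥 ≤ vertexDegree F i := by
      have := vertexDegree_add_missing_self (F := F) hk htop.subset htop.mem htop.notMem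
      have := vertexDegree_missing_le (F := F) hk htop.subset htop.mem htop.notMem
      have := htop.le_of_mem i hi
      omega
    have hv_deg' : (#𝓥 : ℝ) ≤ vertexDegree F i := by exact_mod_cast hv_deg
    have hmissing : (0 : ℝ) ≤ vertexDegree 𝓗 i := Nat.cast_nonneg _
    rw [eq_sub_of_add_eq hi_deg] at hv_deg' ⊢
    nlinarith
  have hmissing : (#𝓗 : ℝ) ≤ ∑ i ∈ C, (vertexDegree 𝓗 i : ℝ) := by
    exact_mod_cast card_le_sum_vertexDegree fun A hA ↦
      (mem_hittingFamily.1 (mem_sdiff.1 hA).1).2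
  refine (sum_le_sum hpoint).trans ?_
  rw [sum_sub_distrib, sum_const, nsmul_eq_mul, ← sum_mul]
  have : (0 : ℝ) ≤ #𝓥 := Nat.cast_nonneg _
  gcongr
  linarith

lemma sq_vertexDegree_sub_le (hF : F ⊆ X.powersetCard k) (hk : 2 ≤ k) (hC : C ⊆ X) (hx : x ∈ X)
    (hxC : x ∉ C) :
    ((vertexDegree F x : ℝ) - outerDegree #X k #C) ^ 2 ≤
      (if x = v then (#𝓥 : ℝ) ^ 2 else 0) + pairCard #X k * vertexDegree 𝓥 x +
        2 * pairCard #X k * vertexDegree 𝓔 x + (vertexDegree 𝓔 x : ℝ) ^ 2 +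
        outerDegree #X k #C * vertexDegree 𝓗 x := by
  have hdeg : (vertexDegree F x : ℝ) + vertexDegree 𝓗 x =
      outerDegree #X k #C + vertexDegree 𝓥 x + vertexDegree 𝓔 x := by
    exact_mod_cast vertexDegree_add_missing (by omega) hC hx hxC
  have hmissing : (vertexDegree 𝓗 x : ℝ) ≤ outerDegree #X k #C := by
    exact_mod_cast vertexDegree_missing_le (by omega) hC hx hxC
  have : (0 : ℝ) ≤ vertexDegree 𝓥 x := Nat.cast_nonneg _
  have : (0 : ℝ) ≤ vertexDegree 𝓔 x := Nat.cast_nonneg _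
  have : (0 : ℝ) ≤ vertexDegree 𝓗 x := Nat.cast_nonneg _
  have : (0 : ℝ) ≤ pairCard #X k := Nat.cast_nonneg _
  rw [eq_sub_of_add_eq hdeg]
  split_ifs with hxv
  · have hV : vertexDegree 𝓥 x = #𝓥 := vertexDegree_eq_card fun A hA ↦ hxv ▸ (mem_filter.1 hA).2
    have hE : vertexDegree 𝓔 x = 0 := vertexDegree_eq_zero fun A hA ↦ hxv ▸ (mem_filter.1 hA).2
    rw [hE, hV] at *
    push_cast
    nlinarith
  · have hV : (vertexDegree 𝓥 x : ℝ) ≤ pairCard #X k := by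
      exact_mod_cast vertexDegree_filter_mem_le (sdiff_subset.trans hF) hk (Ne.symm hxv)
    nlinarith

lemma sum_outside_sq_sub_le (hF : F ⊆ X.powersetCard k) (hk : 2 ≤ k) (hC : C ⊆ X) :
    ∑ x ∈ X \ C, ((vertexDegree F x : ℝ) - outerDegree #X k #C) ^ 2 ≤
      (#𝓥 : ℝ) ^ 2 + pairCard #X k * (k * #𝓥) + 2 * pairCard #X k * (k * #𝓔) +
        ∑ x ∈ X, (vertexDegree 𝓔 x : ℝ) ^ 2 + outerDegree #X k #C * (k * #𝓗) := by
  refine (sum_le_sum fun x hx ↦ sq_vertexDegree_sub_le (v := v) hF hk hC (mem_sdiff.1 hx).1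
    (mem_sdiff.1 hx).2).trans ?_
  have hsub : F \ hittingFamily X k C ⊆ X.powersetCard k := sdiff_subset.trans hF
  simp only [sum_add_distrib, ← mul_sum]
  gcongr
  · rw [sum_ite_eq' (X \ C) v]
    split_ifs
    exacts [le_rfl, sq_nonneg _]
  · exact sum_vertexDegree_le ((filter_subset _ _).trans hsub) sdiff_subset
  · exact sum_vertexDegree_le ((filter_subset _ _).trans hsub) sdiff_subset
  · exact sdiff_subset
  · exact sum_vertexDegree_le (sdiff_subset.trans (hittingFamily_subset X k C)) sdiff_subset

lemma IsSqDegreeMaximal.missing_mul_add_sq_le (hF : IsSqDegreeMaximal X k F) (hk : 2 ≤ k)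
    (htop : IsTopDegree X C v (vertexDegree F)) (hcard : #F = #(hittingFamily X k C) + m)
    (hm : m ≤ starCard #X k #C) (hQ : outerDegree #X k #C ≤ starCard #X k #C) :
    #𝓗 * (starCard #X k #C + #𝓥 - (k + 1) * outerDegree #X k #C : ℝ) + (m : ℝ) ^ 2 ≤
      (#𝓥 : ℝ) ^ 2 + k * pairCard #X k * #𝓥 + 2 * k * pairCard #X k * #𝓔 +
        ∑ x ∈ X, (vertexDegree 𝓔 x : ℝ) ^ 2 := by
  have hcomp := hF.le_sum_sq_sub (by omega) htop.subset htop.mem htop.notMem hcard hm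
    (outerDegree #X k #C)
  rw [← sum_sdiff htop.subset, ← starCard_add_outerDegree #X k #C] at hcomp
  have hcore := sum_core_sq_sub_le hF.subset (by omega) htop hQ
  have houtside := sum_outside_sq_sub_le (v := v) hF.subset hk htop.subset
  push_cast at hcomp
  linarith

lemma sum_sq_vertexDegree_evading_le (hF : F ⊆ X.powersetCard k) (hk : 2 ≤ k)
    (htop : IsTopDegree X C v (vertexDegree F)) {γ : ℝ} (hγ₀ : 0 ≤ γ)
    (hγ : (k : ℝ) ^ 2 * pairCard #X k * #𝓔 ≤ γ ^ 2) :
    ∑ x ∈ X, (vertexDegree 𝓔 x : ℝ) ^ 2 ≤ (outerDegree #X k #C + #𝓥 + γ) * #𝓔 := by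
  refine sum_sq_vertexDegree_le (((filter_subset _ _).trans sdiff_subset).trans hF) hk
    (by positivity) hγ₀ (fun x hx ↦ ?_) hγ
  by_cases hxC : x ∈ C
  · have hzero : vertexDegree 𝓔 x = 0 := vertexDegree_eq_zero fun A hA h ↦
      disjoint_left.1 (disjoint_of_mem_sdiff_hittingFamily hF (mem_filter.1 hA).1) h hxC
    rw [hzero, Nat.cast_zero]
    positivity
  · have hx_le : vertexDegree 𝓔 x ≤ vertexDegree F x :=
      vertexDegree_mono ((filter_subset _ _).trans sdiff_subset) x
    have hv_le := htop.le_of_notMem x hx hxC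
    have hv_deg := vertexDegree_add_missing_self (F := F) (by omega : 1 ≤ k) htop.subset htop.mem
      htop.notMem
    have : vertexDegree 𝓔 x ≤ outerDegree #X k #C + #𝓥 := by omega
    exact_mod_cast this

lemma IsSqDegreeMaximal.missing_mul_add_sq_le_of_sq_le (hF : IsSqDegreeMaximal X k F) (hk : 2 ≤ k)
    (htop : IsTopDegree X C v (vertexDegree F)) (hcard : #F = #(hittingFamily X k C) + m)
    (hm : m ≤ starCard #X k #C) (hQ : outerDegree #X k #C ≤ starCard #X k #C) {γ : ℝ} (hγ₀ : 0 ≤ γ)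
    (hγ : (k : ℝ) ^ 2 * pairCard #X k * #𝓔 ≤ γ ^ 2) :
    #𝓗 * (starCard #X k #C - (k + 1) * outerDegree #X k #C : ℝ) + (m : ℝ) ^ 2 ≤
      #𝓥 * m + k * pairCard #X k * #𝓥 +
        (2 * k * pairCard #X k + outerDegree #X k #C + γ) * #𝓔 := by
  have hsum : (m : ℝ) + #𝓗 = #𝓥 + #𝓔 := by exact_mod_cast card_add_card_missing hcard
  have hmain := hF.missing_mul_add_sq_le hk htop hcard hm hQ
  have hsq := sum_sq_vertexDegree_evading_le hF.subset hk htop hγ₀ hγ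
  linear_combination hmain + hsq - #𝓥 * hsum

lemma missing_le_of_mul_add_sq_le {k P Q M N m h e y : ℝ} (he₀ : 0 ≤ e) (hh₀ : 0 ≤ h) (hy₀ : 0 ≤ y)
    (hm₀ : 0 < m) (hmM : m ≤ M) (heM : e ≤ M) (hQ₀ : 0 ≤ Q) (hkP₀ : 0 ≤ k * P) (hMQ : M + Q = N)
    (hsum : m + h = e + y) (hkQ : 1000 * (k * Q) ≤ N) (hkP : 1000 * (2 * k * P + Q) ≤ N)
    (hmain : h * (M - (k + 1) * Q) + m ^ 2 ≤
      e * m + k * P * e + (2 * k * P + Q + N / 10) * y) :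
    h ≤ 3 / 2 * m := by
  have hleft : 99 / 100 * N * h ≤ h * (M - (k + 1) * Q) := by
    rw [mul_comm h]
    gcongr
    linarith
  have hem : e * m ≤ N * m := by
    gcongr
    linarith
  have hrest : k * P * e + (2 * k * P + Q + N / 10) * y ≤ (N / 1000 + N / 10) * (e + y) := by
    rw [mul_add]
    gcongr <;> linarith
  rw [← hsum] at hrest
  have : N * (99 / 100 * h) ≤ N * (m + 101 / 1000 * (m + h)) := by
    linarith [sq_nonneg m]
  linarith [le_of_mul_le_mul_left this (by linarith : 0 < N)]

lemma IsSqDegreeMaximal.card_missing_le (hF : IsSqDegreeMaximal X k F) (hk : 2 ≤ k)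
    (htop : IsTopDegree X C v (vertexDegree F)) (hcard : #F = #(hittingFamily X k C) + m)
    (hm₀ : 0 < m) (hm : m ≤ starCard #X k #C)
    (hN : 1000 * (#C + 1) * k * (k + #C) * pairCard #X k ≤ starCard #X k 0) :
    (#𝓗 : ℝ) ≤ 3 / 2 * m := by
  have hQ := outerDegree_le_starCard hk hN
  have hsum : (m : ℝ) + #𝓗 = #𝓥 + #𝓔 := by exact_mod_cast card_add_card_missing hcard
  have hkQ : 1000 * ((k : ℝ) * outerDegree #X k #C) ≤ starCard #X k 0 := by
    exact_mod_cast thousand_mul_outerDegree_le hk hN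
  have hkP : 1000 * (2 * (k : ℝ) * pairCard #X k + outerDegree #X k #C) ≤ starCard #X k 0 := by
    exact_mod_cast thousand_mul_pairCard_add_outerDegree_le hk hN
  have hMQ : (starCard #X k #C : ℝ) + outerDegree #X k #C = starCard #X k 0 := by
    exact_mod_cast starCard_add_outerDegree #X k #C
  have hE : #𝓔 ≤ (#C + 1) * starCard #X k 0 := by
    refine le_trans ?_ (card_sdiff_hittingFamily_le (by omega) htop.subset hcard hm)
    exact card_filter_le _ _
  have hγ : (k : ℝ) ^ 2 * pairCard #X k * #𝓔 ≤ (starCard #X k 0 / 10 : ℝ) ^ 2 := by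
    have : 1000 * (k ^ 2 * pairCard #X k * #𝓔) ≤ starCard #X k 0 * starCard #X k 0 :=
      calc 1000 * (k ^ 2 * pairCard #X k * #𝓔)
        _ ≤ 1000 * (k ^ 2 * pairCard #X k * ((#C + 1) * starCard #X k 0)) := by gcongr
        _ = 1000 * (#C + 1) * k * (k + 0) * pairCard #X k * starCard #X k 0 := by ring
        _ ≤ 1000 * (#C + 1) * k * (k + #C) * pairCard #X k * starCard #X k 0 := by
          gcongr
          exact Nat.zero_le _
        _ ≤ starCard #X k 0 * starCard #X k 0 := by gcongr
    have : 1000 * ((k : ℝ) ^ 2 * pairCard #X k * #𝓔) ≤ starCard #X k 0 * starCard #X k 0 := by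
      exact_mod_cast this
    nlinarith [sq_nonneg (starCard #X k 0 : ℝ)]
  refine missing_le_of_mul_add_sq_le (Nat.cast_nonneg _) (Nat.cast_nonneg _) (Nat.cast_nonneg _)
    (by exact_mod_cast hm₀) (by exact_mod_cast hm) ?_ (Nat.cast_nonneg _) (by positivity) hMQ hsum
    hkQ hkP (hF.missing_mul_add_sq_le_of_sq_le hk htop hcard hm hQ (by positivity) hγ)
  exact_mod_cast card_through_le hF.subset (by omega) htop.subset htop.mem htop.notMem

lemma evading_le_of_mul_add_sq_le {k r P Q M m h e y : ℝ} (hk : 2 ≤ k) (hr : 0 ≤ r) (hP₀ : 0 ≤ P)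
    (hQ₀ : 0 ≤ Q) (hh₀ : 0 ≤ h) (hy₀ : 0 ≤ y) (hm₀ : 0 < m) (hmM : m ≤ M)
    (hQ : Q ≤ r * P) (hP : 140 * k ^ 2 * (r + 1) ^ 2 * P ≤ m) (hsum : m + h = e + y)
    (hh : h ≤ 3 / 2 * m)
    (hmain : h * (M - (k + 1) * Q) + m ^ 2 ≤
      e * m + k * P * e + (2 * k * P + Q + m / 7) * y) :
    y ≤ 4 * k * (r + 1) * P := by
  have hmy : m * y ≤ (k + 1) * Q * h + k * P * e + (2 * k * P + Q + m / 7) * y := by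
    have : 0 ≤ h * (M - m) := mul_nonneg hh₀ (by linarith)
    linear_combination hmain + this - m * hsum
  have hkrP : k * (r + 1) * P ≤ m / 280 := by
    have : 0 ≤ k * (r + 1) * P * (k * (r + 1) - 2) :=
      mul_nonneg (by positivity) (by nlinarith)
    linarith
  have hkQh : (k + 1) * Q * h ≤ 3 / 2 * k * (r * P) * (3 / 2 * m) := by
    gcongr
    linarith
  have hkPe : k * P * e ≤ k * P * (5 / 2 * m) := by
    gcongr
    linarith
  have hcoeff : (2 * k * P + Q + m / 7) * y ≤ (m / 140 + m / 7) * y := by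
    gcongr
    have : r * P ≤ k / 2 * (r * P) := le_mul_of_one_le_left (by positivity) (by linarith)
    have : 0 ≤ k * (r * P) := by positivity
    linarith
  have hfinal : m * (17 / 20 * y) ≤ m * (17 / 20 * (4 * k * (r + 1) * P)) := by
    have : 0 ≤ m * (k * (r * P)) := by positivity
    have : 0 ≤ m * (k * P) := by positivity
    linarith
  linarith [le_of_mul_le_mul_left hfinal hm₀]

lemma IsSqDegreeMaximal.card_evading_le (hF : IsSqDegreeMaximal X k F) (hk : 2 ≤ k)
    (htop : IsTopDegree X C v (vertexDegree F)) (hcard : #F = #(hittingFamily X k C) + m)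
    (hm₀ : 0 < m) (hm : m ≤ starCard #X k #C)
    (hN : 1000 * (#C + 1) * k * (k + #C) * pairCard #X k ≤ starCard #X k 0)
    (hP : 140 * k ^ 2 * (#C + 1) ^ 2 * pairCard #X k ≤ m) :
    #𝓔 ≤ 4 * k * (#C + 1) * pairCard #X k := by
  have hsum : (m : ℝ) + #𝓗 = #𝓥 + #𝓔 := by exact_mod_cast card_add_card_missing hcard
  have hmissing := hF.card_missing_le hk htop hcard hm₀ hm hN
  have hP' : 140 * (k : ℝ) ^ 2 * (#C + 1) ^ 2 * pairCard #X k ≤ m := by exact_mod_cast hP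
  have hγ : (k : ℝ) ^ 2 * pairCard #X k * #𝓔 ≤ (m / 7 : ℝ) ^ 2 := by
    have hE : (#𝓔 : ℝ) ≤ 5 / 2 * m := by linarith [(#𝓥).cast_nonneg (α := ℝ)]
    have hkP : (k : ℝ) ^ 2 * pairCard #X k ≤ m / 140 := by
      have : (1 : ℝ) ≤ (#C + 1) ^ 2 := one_le_pow₀ (by simp)
      nlinarith [this, (by positivity : 0 ≤ (k : ℝ) ^ 2 * pairCard #X k)]
    calc (k : ℝ) ^ 2 * pairCard #X k * #𝓔 ≤ m / 140 * (5 / 2 * m) := by gcongr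
      _ ≤ (m / 7 : ℝ) ^ 2 := by linarith [sq_nonneg (m : ℝ)]
  have hQ : (outerDegree #X k #C : ℝ) ≤ #C * pairCard #X k := by
    exact_mod_cast outerDegree_le hk _ _
  have := evading_le_of_mul_add_sq_le (by exact_mod_cast hk) (Nat.cast_nonneg _) (Nat.cast_nonneg _)
    (Nat.cast_nonneg _) (Nat.cast_nonneg _) (Nat.cast_nonneg _)
    (by exact_mod_cast hm₀) (by exact_mod_cast hm) hQ hP' hsum hmissing
    (hF.missing_mul_add_sq_le_of_sq_le hk htop hcard hm (outerDegree_le_starCard hk hN)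
      (by positivity) hγ)
  exact_mod_cast this

lemma IsTopDegree.vertexDegree_le_sum (htop : IsTopDegree X C v (vertexDegree F)) {B : Finset α}
    (hB : ¬ Disjoint B (insert v C)) : vertexDegree F v ≤ ∑ x ∈ B, vertexDegree F x := by
  obtain ⟨i, hiB, hi⟩ := not_disjoint_iff.1 hB
  refine le_trans ?_ (single_le_sum (fun _ _ ↦ Nat.zero_le _) hiB)
  obtain rfl | hiC := mem_insert.1 hi
  exacts [le_rfl, htop.le_of_mem i hiC]

lemma sum_vertexDegree_le_of_disjoint (hF : F ⊆ X.powersetCard k) (hk : 2 ≤ k) (hC : C ⊆ X)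
    {A : Finset α} (hA : A ∈ F) (hdisj : Disjoint A (insert v C)) :
    ∑ x ∈ A, vertexDegree F x ≤ k * (outerDegree #X k #C + pairCard #X k + #𝓔) := by
  obtain ⟨hAX, hAk⟩ := mem_powersetCard.1 (hF hA)
  rw [← smul_eq_mul, ← hAk]
  refine sum_le_card_nsmul _ _ _ fun x hx ↦ ?_
  rw [hAk]
  have hxD := disjoint_left.1 hdisj hx
  simp only [mem_insert, not_or] at hxD
  have hdeg := vertexDegree_add_missing (F := F) (v := v) (by omega : 1 ≤ k) hC (hAX hx) hxD.2
  have hV : vertexDegree 𝓥 x ≤ pairCard #X k :=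
    vertexDegree_filter_mem_le (sdiff_subset.trans hF) hk (Ne.symm hxD.1)
  have hE := vertexDegree_le_card 𝓔 x
  omega

lemma exists_mem_hittingFamily_insert_notMem (hk : 1 ≤ k)
    (htop : IsTopDegree X C v (vertexDegree F)) (hcard : #F = #(hittingFamily X k C) + m)
    (hm : m ≤ starCard #X k #C) {A : Finset α} (hA : A ∈ F) (hdisj : Disjoint A (insert v C)) :
    ∃ B ∈ hittingFamily X k (insert v C), B ∉ F := by
  by_contra! hsub
  have hlt := card_lt_card ((ssubset_iff_of_subset hsub).2
    ⟨A, hA, fun h ↦ (mem_hittingFamily.1 h).2 hdisj⟩)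
  rw [card_hittingFamily_insert hk htop.subset htop.mem htop.notMem] at hlt
  omega

theorem IsSqDegreeMaximal.subset_hittingFamily_insert (hF : IsSqDegreeMaximal X k F) (hk : 2 ≤ k)
    (htop : IsTopDegree X C v (vertexDegree F)) (hcard : #F = #(hittingFamily X k C) + m)
    (hm₀ : 0 < m) (hm : m ≤ starCard #X k #C)
    (hN : 1000 * (#C + 1) * k * (k + #C) * pairCard #X k ≤ starCard #X k 0)
    (hP : 140 * k ^ 2 * (#C + 1) ^ 2 * pairCard #X k ≤ m) :
    F ⊆ hittingFamily X k (insert v C) := by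
  intro A hA
  refine mem_hittingFamily.2 ⟨hF.subset hA, fun hdisj ↦ ?_⟩
  obtain ⟨B, hB, hBF⟩ :=
    exists_mem_hittingFamily_insert_notMem (by omega) htop hcard hm hA hdisj
  obtain ⟨hBX, hBD⟩ := mem_hittingFamily.1 hB
  have hexch := hF.sum_vertexDegree_lt hA hBX hBF
  have hB_le := htop.vertexDegree_le_sum hBD
  have hA_le := sum_vertexDegree_le_of_disjoint hF.subset hk htop.subset hA hdisj
  have hv_deg := vertexDegree_add_missing_self (F := F) (by omega : 1 ≤ k) htop.subset htop.mem
    htop.notMem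
  have hH_le := vertexDegree_le_card 𝓗 v
  have hsum := card_add_card_missing (v := v) hcard
  have hE := hF.card_evading_le hk htop hcard hm₀ hm hN hP
  have hQ := outerDegree_le hk #X #C
  have hm_lt : m < k * (#C * pairCard #X k + pairCard #X k + #𝓔) + #𝓔 := by
    have : k * (outerDegree #X k #C + pairCard #X k + #𝓔) ≤
      k * (#C * pairCard #X k + pairCard #X k + #𝓔) := by gcongr
    omega
  have : k * (#C * pairCard #X k + pairCard #X k + #𝓔) + #𝓔 ≤
      140 * k ^ 2 * (#C + 1) ^ 2 * pairCard #X k :=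
    calc k * (#C * pairCard #X k + pairCard #X k + #𝓔) + #𝓔
      _ = k * ((#C + 1) * pairCard #X k) + (k + 1) * #𝓔 := by ring
      _ ≤ k * ((#C + 1) * pairCard #X k) + (k + 1) * (4 * k * (#C + 1) * pairCard #X k) := by gcongr
      _ = (4 * k + 5) * k * 1 * (#C + 1) * pairCard #X k := by ring
      _ ≤ 140 * k * k * (#C + 1) * (#C + 1) * pairCard #X k := by gcongr <;> omega
      _ = 140 * k ^ 2 * (#C + 1) ^ 2 * pairCard #X k := by ring
  omega

end EvadingMembers

section MissingMembers

variable {α : Type*} [DecidableEq α] {F : Finset (Finset α)} {A C X : Finset α} {i v : α}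
  {k m : ℕ}

local notation "𝓜" => hittingFamily X k (insert v C) \ F

lemma card_missing_add (hFD : F ⊆ hittingFamily X k (insert v C)) (hk : 1 ≤ k) (hC : C ⊆ X)
    (hv : v ∈ X) (hvC : v ∉ C) (hcard : #F = #(hittingFamily X k C) + m) :
    #𝓜 + m = starCard #X k #C := by
  have := card_sdiff_add_card_eq_card hFD
  have := card_hittingFamily_insert hk hC hv hvC
  omega

lemma IsTopDegree.vertexDegree_missing_le (htop : IsTopDegree X C v (vertexDegree F))
    (hF : F ⊆ X.powersetCard k) (hk : 1 ≤ k) (hi : i ∈ C) :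
    vertexDegree 𝓜 i ≤ vertexDegree 𝓜 v := by
  have hD : insert v C ⊆ X := insert_subset htop.mem htop.subset
  have := vertexDegree_add_of_mem hF hk hD (mem_insert_self v C)
  have := vertexDegree_add_of_mem hF hk hD (mem_insert_of_mem hi)
  have := htop.le_of_mem i hi
  omega

lemma vertexDegree_missing_le_pairCard_add (hk : 2 ≤ k) (hiv : i ≠ v) :
    vertexDegree 𝓜 i + vertexDegree 𝓜 v ≤ pairCard #X k + #𝓜 := by
  have hsplit := vertexDegree_filter_add_filter_not 𝓜 (v ∈ ·) i
  have hcard : vertexDegree 𝓜 v + _ = #𝓜 := card_filter_add_card_filter_not (v ∈ ·)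
  have hthrough := vertexDegree_filter_mem_le (𝒜 := 𝓜)
    (sdiff_subset.trans (hittingFamily_subset X k _)) hk hiv.symm
  have havoiding := vertexDegree_le_card {A ∈ 𝓜 | v ∉ A} i
  omega

lemma sum_core_sq_sub_le_missing (hF : F ⊆ X.powersetCard k) (hk : 1 ≤ k)
    (htop : IsTopDegree X C v (vertexDegree F)) :
    ∑ x ∈ C, ((vertexDegree F x : ℝ) - outerDegree #X k (#C + 1)) ^ 2 ≤
      #C * (starCard #X k (#C + 1) : ℝ) ^ 2 -
        (∑ x ∈ C, (vertexDegree 𝓜 x : ℝ)) * (2 * starCard #X k (#C + 1) - vertexDegree 𝓜 v) := by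
  have hD : insert v C ⊆ X := insert_subset htop.mem htop.subset
  rw [sum_mul, ← nsmul_eq_mul, ← sum_const, ← sum_sub_distrib]
  refine sum_le_sum fun x hx ↦ ?_
  have hx_deg : (vertexDegree F x : ℝ) + vertexDegree 𝓜 x =
      starCard #X k (#C + 1) + outerDegree #X k (#C + 1) := by
    exact_mod_cast (vertexDegree_add_of_mem hF hk hD (mem_insert_of_mem hx)).trans
      (starCard_add_outerDegree _ _ _).symm
  have hxv : (vertexDegree 𝓜 x : ℝ) ≤ vertexDegree 𝓜 v := by
    exact_mod_cast htop.vertexDegree_missing_le hF hk hx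
  rw [eq_sub_of_add_eq hx_deg]
  nlinarith [(vertexDegree 𝓜 x).cast_nonneg (α := ℝ)]

lemma vertexDegree_add_missing_of_notMem (hFD : F ⊆ hittingFamily X k (insert v C)) (hk : 1 ≤ k)
    (hC : C ⊆ X) (hv : v ∈ X) (hvC : v ∉ C) {x : α} (hx : x ∈ X) (hxD : x ∉ insert v C) :
    vertexDegree F x + vertexDegree 𝓜 x = outerDegree #X k (#C + 1) := by
  rw [vertexDegree_add_of_notMem hk (insert_subset hv hC) hx hxD, card_insert_of_notMem hvC,
    sdiff_eq_empty_iff_subset.2 hFD, vertexDegree_eq_zero fun A hA ↦ absurd hA (notMem_empty A),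
    add_zero]

lemma sum_outside_sq_sub_le_missing (hFD : F ⊆ hittingFamily X k (insert v C)) (hk : 1 ≤ k)
    (hC : C ⊆ X) (hv : v ∈ X) (hvC : v ∉ C) :
    ∑ x ∈ X \ insert v C, ((vertexDegree F x : ℝ) - outerDegree #X k (#C + 1)) ^ 2 ≤
      outerDegree #X k (#C + 1) * (k * #𝓜) := by
  refine le_trans ?_ (mul_le_mul_of_nonneg_left (sum_vertexDegree_le
    (sdiff_subset.trans (hittingFamily_subset X k _)) (sdiff_subset (t := insert v C)))
    (Nat.cast_nonneg _))
  rw [mul_sum]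
  refine sum_le_sum fun x hx ↦ ?_
  have hx_deg : (vertexDegree F x : ℝ) + vertexDegree 𝓜 x = outerDegree #X k (#C + 1) := by
    exact_mod_cast vertexDegree_add_missing_of_notMem hFD hk hC hv hvC (mem_sdiff.1 hx).1
      (mem_sdiff.1 hx).2
  have : (0 : ℝ) ≤ vertexDegree F x := Nat.cast_nonneg _
  have : (0 : ℝ) ≤ vertexDegree 𝓜 x := Nat.cast_nonneg _
  rw [← hx_deg, sub_add_cancel_left, neg_sq]
  nlinarith

lemma IsSqDegreeMaximal.sq_starCard_sub_missing_le (hF : IsSqDegreeMaximal X k F) (hk : 1 ≤ k)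
    (htop : IsTopDegree X C v (vertexDegree F)) (hFD : F ⊆ hittingFamily X k (insert v C))
    (hcard : #F = #(hittingFamily X k C) + m) (hm : m ≤ starCard #X k #C) :
    ((starCard #X k (#C + 1) : ℝ) - #𝓜) ^ 2 ≤
      ((starCard #X k (#C + 1) : ℝ) - vertexDegree 𝓜 v) ^ 2 -
        (∑ x ∈ C, (vertexDegree 𝓜 x : ℝ)) * (2 * starCard #X k (#C + 1) - vertexDegree 𝓜 v) +
        outerDegree #X k (#C + 1) * (k * #𝓜) := by
  have hD : insert v C ⊆ X := insert_subset htop.mem htop.subset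
  have hcomp := hF.le_sum_sq_sub hk htop.subset htop.mem htop.notMem hcard hm
    (outerDegree #X k (#C + 1))
  have hcore := sum_core_sq_sub_le_missing hF.subset hk htop
  have houtside := sum_outside_sq_sub_le_missing hFD hk htop.subset htop.mem htop.notMem
  have hMD : (starCard #X k (#C + 1) : ℝ) + outerDegree #X k (#C + 1) = starCard #X k 0 := by
    exact_mod_cast starCard_add_outerDegree _ _ _
  have hMC : (starCard #X k #C : ℝ) + outerDegree #X k #C = starCard #X k 0 := by
    exact_mod_cast starCard_add_outerDegree _ _ _
  have hmissing : (#𝓜 : ℝ) + m = starCard #X k #C := by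
    exact_mod_cast card_missing_add hFD hk htop.subset htop.mem htop.notMem hcard
  have hv_deg : (vertexDegree F v : ℝ) + vertexDegree 𝓜 v = starCard #X k 0 := by
    exact_mod_cast vertexDegree_add_of_mem hF.subset hk hD (mem_insert_self v C)
  have hcomp_v : (outerDegree #X k #C + m - outerDegree #X k (#C + 1) : ℝ) =
      starCard #X k (#C + 1) - #𝓜 := by linarith
  have hF_v : (vertexDegree F v - outerDegree #X k (#C + 1) : ℝ) =
      starCard #X k (#C + 1) - vertexDegree 𝓜 v := by linarith
  rw [← sum_sdiff hD, sum_insert htop.notMem, hcomp_v, hF_v, ← eq_sub_of_add_eq hMD] at hcomp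
  linarith

lemma le_add_of_sq_sub_le {M μ h Z E : ℝ} (hμ : 0 < μ) (hh : h ≤ 2 * M) (hZ : μ ≤ h + Z)
    (hsq : (M - μ) ^ 2 ≤ (M - h) ^ 2 - Z * (2 * M - h) + E * μ) : μ ≤ h + E := by
  have hZ_mul : (μ - h) * (2 * M - h) ≤ Z * (2 * M - h) :=
    mul_le_mul_of_nonneg_right (by linarith) (by linarith)
  refine le_of_mul_le_mul_right ?_ hμ
  linarith

lemma IsSqDegreeMaximal.card_missing_le_add (hF : IsSqDegreeMaximal X k F) (hk : 1 ≤ k)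
    (htop : IsTopDegree X C v (vertexDegree F)) (hFD : F ⊆ hittingFamily X k (insert v C))
    (hcard : #F = #(hittingFamily X k C) + m) (hm : m ≤ starCard #X k #C)
    (hM : starCard #X k 0 ≤ 2 * starCard #X k (#C + 1)) :
    #𝓜 ≤ vertexDegree 𝓜 v + k * outerDegree #X k (#C + 1) := by
  obtain hzero | hpos := (#𝓜).eq_zero_or_pos
  · exact hzero.trans_le (Nat.zero_le _)
  have hv_le : vertexDegree 𝓜 v ≤ 2 * starCard #X k (#C + 1) := by
    have := vertexDegree_le_card 𝓜 v
    have := card_missing_add hFD hk htop.subset htop.mem htop.notMem hcard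
    have := starCard_antitone #X k (#C).zero_le
    omega
  have hhit : #𝓜 ≤ vertexDegree 𝓜 v + ∑ x ∈ C, vertexDegree 𝓜 x := by
    rw [← sum_insert htop.notMem]
    exact card_le_sum_vertexDegree fun A hA ↦ (mem_hittingFamily.1 (mem_sdiff.1 hA).1).2
  have hsq := hF.sq_starCard_sub_missing_le hk htop hFD hcard hm
  rw [show (outerDegree #X k (#C + 1) * (k * #𝓜) : ℝ) =
    k * outerDegree #X k (#C + 1) * #𝓜 by ring] at hsq
  exact_mod_cast le_add_of_sq_sub_le (by exact_mod_cast hpos) (by exact_mod_cast hv_le)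
    (by exact_mod_cast hhit) hsq

lemma sum_vertexDegree_le_add (hFD : F ⊆ hittingFamily X k (insert v C)) (hk : 1 ≤ k)
    (hC : C ⊆ X) (hv : v ∈ X) (hvC : v ∉ C) (hA : A ∈ F) (hAC : Disjoint A C) :
    ∑ x ∈ A, vertexDegree F x ≤ vertexDegree F v + k * outerDegree #X k (#C + 1) := by
  obtain ⟨hA', hAD⟩ := mem_hittingFamily.1 (hFD hA)
  obtain ⟨hAX, hAk⟩ := mem_powersetCard.1 hA'
  have hvA : v ∈ A := by
    by_contra hvA
    exact hAD (disjoint_insert_right.2 ⟨hvA, hAC⟩)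
  rw [← add_sum_erase A _ hvA, ← hAk]
  gcongr
  refine (sum_le_card_nsmul _ _ _ fun x hx ↦ ?_).trans
    (Nat.mul_le_mul_right _ (card_le_card (erase_subset v A)))
  obtain ⟨hxv, hxA⟩ := mem_erase.1 hx
  rw [hAk, ← vertexDegree_add_missing_of_notMem hFD hk hC hv hvC (hAX hxA)]
  · exact Nat.le_add_right _ _
  · simp [hxv, disjoint_left.1 hAC hxA]

theorem IsSqDegreeMaximal.hittingFamily_subset (hF : IsSqDegreeMaximal X k F) (hk : 2 ≤ k)
    (htop : IsTopDegree X C v (vertexDegree F)) (hFD : F ⊆ hittingFamily X k (insert v C))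
    (hcard : #F = #(hittingFamily X k C) + m) (hm₀ : 0 < m) (hm : m ≤ starCard #X k #C)
    (hN : 2 * (#C + 1) * pairCard #X k ≤ starCard #X k 0)
    (hP : m = starCard #X k #C ∨ m + 4 * k * (#C + 1) * pairCard #X k ≤ starCard #X k #C) :
    hittingFamily X k C ⊆ F := by
  by_contra hsub
  obtain ⟨B, hB, hBF⟩ := not_subset.1 hsub
  obtain ⟨hBX, hBC⟩ := mem_hittingFamily.1 hB
  obtain ⟨i, hiB, hiC⟩ := not_disjoint_iff.1 hBC
  obtain ⟨A, hA, hAC⟩ : ∃ A ∈ F, A ∉ hittingFamily X k C :=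
    exists_mem_notMem_of_card_lt_card (by omega)
  have hD : insert v C ⊆ X := insert_subset htop.mem htop.subset
  have hQ := outerDegree_le hk #X (#C + 1)
  have hMQ := starCard_add_outerDegree #X k (#C + 1)
  have hmissing_pos : 0 < #𝓜 := card_pos.2 ⟨B, mem_sdiff.2
    ⟨mem_hittingFamily.2 ⟨hBX, fun h ↦ hBC (h.mono_right (subset_insert v C))⟩, hBF⟩⟩
  have hmissing := card_missing_add hFD (by omega) htop.subset htop.mem htop.notMem hcard
  have hmissing_le := hF.card_missing_le_add (by omega) htop hFD hcard hm (by linarith)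
  have hexch := hF.sum_vertexDegree_lt hA hBX hBF
  have hA_le := sum_vertexDegree_le_add hFD (by omega) htop.subset htop.mem htop.notMem hA
    (disjoint_of_mem_sdiff_hittingFamily hF.subset (mem_sdiff.2 ⟨hA, hAC⟩))
  have hi_le : vertexDegree F i ≤ ∑ x ∈ B, vertexDegree F x :=
    single_le_sum (fun _ _ ↦ Nat.zero_le _) hiB
  have hi_deg := vertexDegree_add_of_mem hF.subset (by omega) hD (mem_insert_of_mem hiC)
  have hv_deg := vertexDegree_add_of_mem hF.subset (by omega) hD (mem_insert_self v C)
  have hiv := vertexDegree_missing_le_pairCard_add (X := X) (C := C) (F := F) hk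
    (ne_of_mem_of_not_mem hiC htop.notMem)
  have hsmall : pairCard #X k + 3 * (k * outerDegree #X k (#C + 1)) ≤
      4 * k * (#C + 1) * pairCard #X k :=
    calc pairCard #X k + 3 * (k * outerDegree #X k (#C + 1))
      _ ≤ 1 * 1 * pairCard #X k + 3 * (k * ((#C + 1) * pairCard #X k)) := by gcongr; omega
      _ ≤ k * (#C + 1) * pairCard #X k + 3 * (k * ((#C + 1) * pairCard #X k)) := by
        gcongr <;> omega
      _ = 4 * k * (#C + 1) * pairCard #X k := by ring
  omega

end MissingMembers

section Stability

variable {α : Type*} [DecidableEq α] {F : Finset (Finset α)} {C X : Finset α} {v : α}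
  {c k n s : ℕ}

lemma mul_pairCard_le (hk : 2 ≤ k) (hkn : k ≤ n) : n * pairCard n k ≤ k * starCard n k 0 := by
  obtain ⟨k, rfl⟩ := Nat.exists_eq_add_of_le' hk
  obtain ⟨n, rfl⟩ := Nat.exists_eq_add_of_le' (hk.trans hkn)
  have habsorb : (n + 1) * n.choose k = (n + 1).choose (k + 1) * (k + 1) :=
    Nat.add_one_mul_choose_eq n k
  have hpascal : n.choose k ≤ (n + 1).choose (k + 1) :=
    Nat.choose_succ_succ' n k ▸ Nat.le_add_right _ _
  simp only [pairCard, starCard, zero_add, Nat.add_succ_sub_one, Nat.add_sub_cancel]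
  linarith

lemma mul_pairCard_le_starCard (hk : 2 ≤ k) (hkn : k ≤ n) (hc : k * c ≤ n) :
    c * pairCard n k ≤ starCard n k 0 := by
  refine le_of_mul_le_mul_left ?_ (by omega : 0 < k)
  rw [← mul_assoc]
  exact (Nat.mul_le_mul_right _ hc).trans (mul_pairCard_le hk hkn)

lemma sq_mul_pairCard_le_mul_starCard (hk : 2 ≤ k) (hkn : k ≤ n)
    (hQ : 15 * outerDegree n k s ≤ starCard n k 0) {t d : ℝ} (ht : 0 ≤ t)
    (hd : 150 * (k : ℝ) ^ 3 * t / n ≤ d) :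
    140 * (k : ℝ) ^ 2 * t * pairCard n k ≤ d * starCard n k s := by
  have hn : (0 : ℝ) < n := by exact_mod_cast (by omega : 0 < n)
  have hstar : 14 * starCard n k 0 ≤ 15 * starCard n k s := by
    have := starCard_add_outerDegree n k s
    omega
  have hpair : 14 * ((n : ℝ) * pairCard n k) ≤ k * (15 * starCard n k s) := by
    exact_mod_cast calc 14 * (n * pairCard n k)
      _ ≤ 14 * (k * starCard n k 0) := Nat.mul_le_mul_left _ (mul_pairCard_le hk hkn)
      _ = k * (14 * starCard n k 0) := by ring
      _ ≤ k * (15 * starCard n k s) := Nat.mul_le_mul_left _ hstar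
  refine le_trans ?_ (mul_le_mul_of_nonneg_right hd (Nat.cast_nonneg _))
  rw [div_mul_eq_mul_div, le_div_iff₀ hn]
  linarith [mul_le_mul_of_nonneg_left hpair (by positivity : 0 ≤ 10 * (k : ℝ) ^ 2 * t)]

lemma add_le_of_mul_le (hk : 1 ≤ k) (hn : 3000 * (s + 1) ^ 3 * (k + s) * k ^ 2 ≤ n) :
    k + s ≤ n :=
  calc k + s
    _ = 1 * 1 * (k + s) * 1 := by ring
    _ ≤ 3000 * (s + 1) ^ 3 * (k + s) * k ^ 2 := by
      gcongr
      · norm_num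
      · exact Nat.one_le_pow _ _ s.succ_pos
      · exact Nat.one_le_pow _ _ hk
    _ ≤ n := hn

lemma cube_mul_sq_le_of_mul_le (hn : 3000 * (s + 1) ^ 3 * (k + s) * k ^ 2 ≤ n) :
    150 * k ^ 3 * (s + 1) ^ 2 ≤ n :=
  calc 150 * k ^ 3 * (s + 1) ^ 2
    _ = 150 * (s + 1) ^ 2 * (k + 0) * k ^ 2 := by ring
    _ ≤ 3000 * (s + 1) ^ 3 * (k + s) * k ^ 2 := by gcongr <;> omega
    _ ≤ n := hn

lemma exists_eq_add_of_eq_add_mul_starCard (hk : 2 ≤ k)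
    (hn : 3000 * (s + 1) ^ 3 * (k + s) * k ^ 2 ≤ n)
    (hQ : 15 * outerDegree n k s ≤ starCard n k 0) {δ : ℝ}
    (hδ : (150 * (k : ℝ) ^ 3 * ((s : ℝ) + 1) ^ 2 / n ≤ δ ∧
      δ ≤ 1 - 150 * (k : ℝ) ^ 3 * ((s : ℝ) + 1) ^ 3 / n) ∨ δ = 1)
    {a b : ℕ} (hab : (a : ℝ) = b + δ * starCard n k s) :
    ∃ m, a = b + m ∧ m ≤ starCard n k s ∧ 140 * k ^ 2 * (s + 1) ^ 2 * pairCard n k ≤ m ∧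
      (m = starCard n k s ∨ m + 4 * k * (s + 1) * pairCard n k ≤ starCard n k s) := by
  have hkn : k ≤ n := (Nat.le_add_right k _).trans (add_le_of_mul_le (by omega) hn)
  have hlow : 150 * (k : ℝ) ^ 3 * ((s : ℝ) + 1) ^ 2 / n ≤ δ := by
    obtain ⟨h, -⟩ | rfl := hδ
    · exact h
    · exact div_le_one_of_le₀ (by exact_mod_cast cube_mul_sq_le_of_mul_le hn) n.cast_nonneg
  have hδ₀ : 0 ≤ δ := le_trans (by positivity) hlow
  have hba : b ≤ a := by
    have := mul_nonneg hδ₀ (starCard n k s).cast_nonneg (α := ℝ)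
    exact_mod_cast (by linarith : (b : ℝ) ≤ a)
  obtain ⟨m, rfl⟩ := Nat.exists_eq_add_of_le hba
  have hm : (m : ℝ) = δ * starCard n k s := by
    push_cast at hab
    linarith
  have hm_low : 140 * k ^ 2 * (s + 1) ^ 2 * pairCard n k ≤ m := by
    exact_mod_cast hm ▸ sq_mul_pairCard_le_mul_starCard hk hkn hQ (by positivity) hlow
  obtain ⟨-, hup⟩ | rfl := hδ
  · have hgap := sq_mul_pairCard_le_mul_starCard hk hkn hQ (by positivity)
      (le_sub_comm.1 hup)
    rw [sub_mul, one_mul, ← hm, le_sub_iff_add_le'] at hgap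
    have hgap' : m + 140 * k ^ 2 * (s + 1) ^ 3 * pairCard n k ≤ starCard n k s := by
      exact_mod_cast hgap
    have hcoeff : 4 * k * (s + 1) * pairCard n k ≤ 140 * k ^ 2 * (s + 1) ^ 3 * pairCard n k := by
      gcongr
      · norm_num
      · exact Nat.le_self_pow two_ne_zero k
      · exact Nat.le_self_pow three_ne_zero _
    exact ⟨m, rfl, by omega, hm_low, .inr (by omega)⟩
  · rw [one_mul, Nat.cast_inj] at hm
    exact ⟨m, rfl, hm.le, hm_low, .inl hm⟩

theorem IsSqDegreeMaximal.hittingFamily_subset_and_subset_insert (hF : IsSqDegreeMaximal X k F)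
    (hk : 2 ≤ k) (htop : IsTopDegree X C v (vertexDegree F))
    (hn : 3000 * (#C + 1) ^ 3 * (k + #C) * k ^ 2 ≤ #X) {δ : ℝ}
    (hδ : (150 * (k : ℝ) ^ 3 * ((#C : ℝ) + 1) ^ 2 / #X ≤ δ ∧
      δ ≤ 1 - 150 * (k : ℝ) ^ 3 * ((#C : ℝ) + 1) ^ 3 / #X) ∨ δ = 1)
    (hcard : (#F : ℝ) = #(hittingFamily X k C) + δ * starCard #X k #C) :
    hittingFamily X k C ⊆ F ∧ F ⊆ hittingFamily X k (insert v C) := by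
  have hkn : k ≤ #X := (Nat.le_add_right k _).trans (add_le_of_mul_le (by omega) hn)
  have hN : 1000 * (#C + 1) * k * (k + #C) * pairCard #X k ≤ starCard #X k 0 := by
    refine mul_pairCard_le_starCard hk hkn (le_trans ?_ hn)
    calc k * (1000 * (#C + 1) * k * (k + #C))
      _ = 1000 * (#C + 1) * (k + #C) * k ^ 2 := by ring
      _ ≤ 3000 * (#C + 1) ^ 3 * (k + #C) * k ^ 2 := by
        gcongr
        · norm_num
        · exact Nat.le_self_pow three_ne_zero _
  have hN₂ : 2 * (#C + 1) * pairCard #X k ≤ starCard #X k 0 := by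
    refine mul_pairCard_le_starCard hk hkn (le_trans ?_ hn)
    calc k * (2 * (#C + 1))
      _ = 2 * (#C + 1) * 1 * k := by ring
      _ ≤ 3000 * (#C + 1) ^ 3 * (k + #C) * k ^ 2 := by
        gcongr
        · norm_num
        · exact Nat.le_self_pow three_ne_zero _
        · omega
        · exact Nat.le_self_pow two_ne_zero k
  have hQ : 15 * outerDegree #X k #C ≤ starCard #X k 0 := by
    have := thousand_mul_pairCard_add_outerDegree_le hk hN
    omega
  obtain ⟨m, hm_card, hm_le, hm_low, hm_up⟩ :=
    exists_eq_add_of_eq_add_mul_starCard hk hn hQ hδ hcard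
  have hm₀ : 0 < m := by
    have : 0 < pairCard #X k := Nat.choose_pos (by omega)
    exact lt_of_lt_of_le (by positivity) hm_low
  have hsub := hF.subset_hittingFamily_insert hk htop hm_card hm₀ hm_le hN hm_low
  exact ⟨hF.hittingFamily_subset hk htop hsub hm_card hm₀ hm_le hN₂ hm_up, hsub⟩

end Stability

section Permutation

variable {α : Type*} [LinearOrder α] {D X : Finset α} {k n r : ℕ}

lemma exists_perm_antitoneOn {β : Type*} [LinearOrder β] (X : Finset α) (f : α → β) :
    ∃ π : Equiv.Perm α, (∀ x, π x ∈ X ↔ x ∈ X) ∧ AntitoneOn (f ∘ π) X := by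
  let e := X.orderIsoOfFin rfl
  let g (i : Fin #X) : βᵒᵈ := OrderDual.toDual (f (e i))
  let τ : Equiv.Perm X := e.toEquiv.permCongr (Tuple.sort g)
  have hτ (x : α) (hx : x ∈ X) : Equiv.Perm.ofSubtype τ x = e (Tuple.sort g (e.symm ⟨x, hx⟩)) :=
    Equiv.Perm.ofSubtype_apply_of_mem τ hx
  refine ⟨Equiv.Perm.ofSubtype τ, Equiv.Perm.ofSubtype_apply_mem_iff_mem τ, ?_⟩
  intro x hx y hy hxy
  simp only [Function.comp_apply, hτ x hx, hτ y hy]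
  exact Tuple.monotone_sort g (e.symm.monotone hxy)

lemma isTopDegree_image {π : Equiv.Perm ℕ} {d : ℕ → ℕ} (hπ : ∀ x, π x ∈ Icc 1 n ↔ x ∈ Icc 1 n)
    (hd : AntitoneOn (d ∘ π) (Icc 1 n)) (hr : r < n) :
    IsTopDegree (Icc 1 n) ((Icc 1 r).image π) (π (r + 1)) d where
  subset := image_subset_iff.2 fun x hx ↦ (hπ x).2 (Icc_subset_Icc_right hr.le hx)
  mem := (hπ _).2 (mem_Icc.2 ⟨by omega, hr⟩)
  notMem h := by simp at h
  le_of_mem := forall_mem_image.2 fun x hx ↦ by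
    obtain ⟨hx₁, hxr⟩ := mem_Icc.1 hx
    exact hd (mem_coe.2 (mem_Icc.2 ⟨hx₁, by omega⟩)) (mem_coe.2 (mem_Icc.2 ⟨by omega, hr⟩))
      (by omega)
  le_of_notMem y hy hyC := by
    obtain ⟨x, rfl⟩ := π.surjective y
    rw [hπ] at hy
    obtain ⟨hx₁, -⟩ := mem_Icc.1 hy
    have hxr : r < x := by
      by_contra! hxr
      exact hyC (mem_image_of_mem π (mem_Icc.2 ⟨hx₁, hxr⟩))
    exact hd (mem_coe.2 (mem_Icc.2 ⟨by omega, hr⟩)) (mem_coe.2 hy) hxr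

lemma map_hittingFamily {β : Type*} [DecidableEq β] (f : α ↪ β) (X : Finset α) (k : ℕ)
    (D : Finset α) :
    (hittingFamily X k D).map (mapEmbedding f).toEmbedding =
      hittingFamily (X.map f) k (D.map f) := by
  rw [hittingFamily, hittingFamily, powersetCard_map, filter_map]
  simp only [Function.comp_def, RelEmbedding.coe_toEmbedding, mapEmbedding_apply, disjoint_map]

lemma image_symm_hittingFamily_image {π : Equiv.Perm α} (hπ : ∀ x, π x ∈ X ↔ x ∈ X) :
    (hittingFamily X k (D.image π)).image (image π.symm) = hittingFamily X k D := by
  have hX : X.map π.symm.toEmbedding = X := by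
    ext x
    rw [mem_map_equiv, Equiv.symm_symm, hπ]
  have hD : (D.image π).map π.symm.toEmbedding = D := by
    rw [map_eq_image, Equiv.coe_toEmbedding, image_image, π.symm_comp_self, image_id]
  have h := map_hittingFamily π.symm.toEmbedding X k (D.image π)
  rw [hX, hD, map_eq_image] at h
  rw [← h]
  exact image_congr fun A _ ↦ (map_eq_image π.symm.toEmbedding A).symm

end Permutation

section LexPrefix

variable {k n r : ℕ}

lemma isLexPrefix_hittingFamily (n k r : ℕ) :
    IsLexPrefix n k (hittingFamily (Icc 1 n) k (Icc 1 r)) := by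
  refine ⟨hittingFamily_subset _ _ _, fun A hA B hB ⟨m, hm, hmin⟩ ↦ mem_hittingFamily.2 ⟨hB, ?_⟩⟩
  obtain ⟨x, hxA, hxr⟩ := not_disjoint_iff.1 (mem_hittingFamily.1 hA).2
  have hmB := (mem_sdiff.1 hm).1
  by_cases hxB : x ∈ B
  · exact not_disjoint_iff.2 ⟨x, hxB, hxr⟩
  · have hmx : m ≤ x := hmin x (by simp [hxA, hxB])
    have hm_one := (mem_Icc.1 ((mem_powersetCard.1 hB).1 hmB)).1
    exact not_disjoint_iff.2 ⟨m, hmB, mem_Icc.2 ⟨hm_one, hmx.trans (mem_Icc.1 hxr).2⟩⟩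

lemma card_hittingFamily_Icc (hk : 1 ≤ k) (hr : r ≤ n) (hn : 1 ≤ n) :
    #(hittingFamily (Icc 1 n) k (Icc 1 r)) = lexStarCard n k 1 r := by
  have h := card_hittingFamily_add (k := k) (Icc_subset_Icc_right hr : Icc 1 r ⊆ Icc 1 n)
  simp only [Nat.card_Icc, Nat.add_sub_cancel] at h
  simp only [lexStarCard, Nat.sub_add_cancel hk, Nat.sub_add_cancel hn, Nat.add_sub_cancel_left]
  omega

end LexPrefix

/-- **Theorem (main, t = 1).** If `F` is a family of `k`-subsets of `[n]` of size
`∑_{i=1}^{r} C(n−i,k−1) + δ·C(n−(r+1),k−1)` with `δ` in the admissible range, and `F`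
maximizes the total intersection among all families of the same size, then up to a
permutation of `[n]`, `L_{n,k,1}^{(r)} ⊆ F ⊆ L_{n,k,1}^{(r+1)}`. -/
theorem stmt0 (k r n : ℕ) (hk : 2 ≤ k)
    (hn : 3000 * (r + 1) ^ 3 * (k + r) * k ^ 2 ≤ n)
    (δ : ℝ)
    (hδ : (150 * (k : ℝ) ^ 3 * ((r : ℝ) + 1) ^ 2 / (n : ℝ) ≤ δ ∧
           δ ≤ 1 - 150 * (k : ℝ) ^ 3 * ((r : ℝ) + 1) ^ 3 / (n : ℝ)) ∨ δ = 1)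
    (F : Finset (Finset ℕ)) (hF : F ⊆ (Icc 1 n).powersetCard k)
    (hcard : (F.card : ℝ) =
      (∑ i ∈ Icc 1 r, ((n - i).choose (k - 1) : ℝ)) + δ * ((n - (r + 1)).choose (k - 1) : ℝ))
    (hopt : ∀ G ⊆ (Icc 1 n).powersetCard k, G.card = F.card → totalInt G ≤ totalInt F) :
    ∃ σ : Equiv.Perm ℕ, (∀ x ∈ Icc 1 n, σ x ∈ Icc 1 n) ∧
      ∃ Lr Lr1 : Finset (Finset ℕ),
        IsLexPrefix n k Lr ∧ Lr.card = lexStarCard n k 1 r ∧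
        IsLexPrefix n k Lr1 ∧ Lr1.card = lexStarCard n k 1 (r + 1) ∧
        Lr ⊆ (F.image fun A => A.image fun x => σ x) ∧
        (F.image fun A => A.image fun x => σ x) ⊆ Lr1 := by
  have hr : r < n := by
    have := add_le_of_mul_le (by omega) hn
    omega
  obtain ⟨π, hπ, hanti⟩ := exists_perm_antitoneOn (Icc 1 n) (vertexDegree F)
  have htop := isTopDegree_image hπ hanti hr
  have hC : #((Icc 1 r).image π) = r := by simp [card_image_of_injective _ π.injective]
  have hX : #(Icc 1 n) = n := by simp
  have hmax := isSqDegreeMaximal_of_totalInt_le hF hopt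
  obtain ⟨hsub, hsup⟩ :=
    hmax.hittingFamily_subset_and_subset_insert hk htop (by rwa [hC, hX]) (by rwa [hC, hX])
      (by rw [card_hittingFamily (by omega) htop.subset, hC, hX]; exact_mod_cast hcard)
  rw [← image_insert, insert_Icc_right_eq_Icc_add_one (by omega)] at hsup
  refine ⟨π.symm, fun x hx ↦ by rwa [← hπ, π.apply_symm_apply], hittingFamily (Icc 1 n) k (Icc 1 r),
    hittingFamily (Icc 1 n) k (Icc 1 (r + 1)), isLexPrefix_hittingFamily n k r,
    card_hittingFamily_Icc (by omega) hr.le (by omega), isLexPrefix_hittingFamily n k (r + 1),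
    card_hittingFamily_Icc (by omega) hr (by omega), ?_, ?_⟩
  · exact image_symm_hittingFamily_image hπ ▸ image_subset_image hsub
  · exact image_symm_hittingFamily_image hπ ▸ image_subset_image hsup
end

section
/- Let k ≥ 2, r ≥ 0 and t ≥ 2 be fixed integers, let C_s = 2^{2^{s−1}−1} · 10^{2^{s+2}−2} · (k² t⁴ (r+1)⁷)^{2^{s−1}}, let n ≥ C_1·(3t·C_t)^{2t}, and let δ ∈ [60k²(r+1)⁶t⁴/C_1, 1 − 60k²(r+1)⁶t⁴/C_1] ∪ {1}. Let F ⊆ C([n],k) have size |F| = Σ_{i=t}^{t+r−1} C(n−i, k−t) + δ·C(n−(t+r), k−t) and satisfy I(F) = MI(F). If F contains at most one full t-star, then there exists a subset U ⊆ [n] with |U| ≤ t(4r+5) that is a t-cover of F, i.e. |F ∩ U| ≥ t for every F ∈ F. -/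
open Finset

/-!
Write `N` for the size of a full `t`-star. The initial lexicographic family of the given size
splits into `r` stars and a `δ`-part of a further one, so an optimal `F` has total intersection at
least `(t - 1)|F|² + (r + δ²)N²` up to lower-order terms. Conversely, let `H` be the bounded set of
points of large degree. Grouping the members of `F` by their trace on `H` bounds the total
intersection by `(t - 1)|F|² + ∑ d(S)²` up to lower-order terms, where `d(S) ≤ N` counts the
members with trace `S`, `|S| = t`. Comparing the two, at most `r + 1` traces carry almost all of
`F`; let `U` be their union, so that all degrees outside `U` are small.

If some `A₀ ∈ F` met `U` in fewer than `t` points, it would contribute at most about `(t - 1)|F|`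
to the total intersection. A member `A` whose trace on `U` is a `t`-set `Y` contributes little more
than `Y` does, hence, if the star of `Y` is not full, little more than a missing member of that
star, which by optimality cannot beat `A₀`. Only the members of full stars can thus contribute more
than about `(t - 1)|F|`, each by at most `N`. As at most `r` stars are full, the total excess over
`(t - 1)|F|²` is at most `rN²` up to lower-order terms, contradicting the gain `δ²N²`.
-/

theorem exists_subset_card_eq_forall_sdiff_le {α β : Type*} [DecidableEq α] [LinearOrder β]
    {X : Finset α} (w : α → β) {q : ℕ} (hq : q ≤ #X) :
    ∃ S ⊆ X, #S = q ∧ ∀ x ∈ S, ∀ y ∈ X \ S, w y ≤ w x := by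
  induction q with
  | zero => exact ⟨∅, empty_subset X, card_empty, by simp⟩
  | succ q ih =>
    obtain ⟨S, hSX, hScard, hS⟩ := ih (by lia)
    have hne : (X \ S).Nonempty := by
      rw [← card_pos, card_sdiff_of_subset hSX]
      lia
    obtain ⟨z, hz, hzmax⟩ := exists_max_image (X \ S) w hne
    obtain ⟨hzX, hzS⟩ := mem_sdiff.1 hz
    refine ⟨insert z S, insert_subset hzX hSX, by rw [card_insert_of_notMem hzS, hScard], ?_⟩
    intro x hx y hy
    have hy' : y ∈ X \ S := sdiff_subset_sdiff Subset.rfl (subset_insert z S) hy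
    rcases mem_insert.1 hx with rfl | hx
    · exact hzmax y hy'
    · exact hS x hx y hy'

section Weights

variable {α : Type*} {X : Finset α} {w : α → ℝ}

theorem sum_sq_le_of_threshold [DecidableEq α] {S : Finset α} {b : ℝ} (hSX : S ⊆ X)
    (hw0 : ∀ x ∈ X, 0 ≤ w x) (hw1 : ∀ x ∈ S, w x ≤ 1) (hbS : ∀ x ∈ S, b ≤ w x)
    (hbX : ∀ x ∈ X \ S, w x ≤ b) :
    ∑ x ∈ X, w x ^ 2 ≤ ∑ x ∈ S, w x + b * (∑ x ∈ X, w x - #S) := by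
  have hin : ∑ x ∈ S, w x ^ 2 ≤ ∑ x ∈ S, (w x - b * (1 - w x)) :=
    sum_le_sum fun x hx => by nlinarith [hw1 x hx, hbS x hx]
  have hout : ∑ x ∈ X \ S, w x ^ 2 ≤ b * ∑ x ∈ X \ S, w x := by
    rw [mul_sum]
    exact sum_le_sum fun x hx => by nlinarith [hw0 x (sdiff_subset hx), hbX x hx]
  have hsplit : ∑ x ∈ S, (w x - b * (1 - w x)) = ∑ x ∈ S, w x - b * (#S - ∑ x ∈ S, w x) := by
    simp only [sum_sub_distrib, ← mul_sum, sum_const, nsmul_eq_mul, mul_one]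
  rw [← sum_sdiff hSX (f := fun x => w x ^ 2), ← sum_sdiff hSX (f := w)]
  linarith

/- With `b` the `(r + 1)`-st largest weight and `p` the sum of the `r` larger ones, the threshold
bound reads `r + δ² - e ≤ p + b δ`, and `p ≤ r` then controls the missing mass `m - (p + b)`. -/
theorem exists_subset_card_le_mul_sub_sum_le {r : ℕ} {δ e m : ℝ} (hδ0 : 0 ≤ δ) (hδ1 : δ ≤ 1)
    (hw0 : ∀ x ∈ X, 0 ≤ w x) (hw1 : ∀ x ∈ X, w x ≤ 1) (hm : m ≤ r + δ)
    (hsum : ∑ x ∈ X, w x ≤ m) (hsq : r + δ ^ 2 - e ≤ ∑ x ∈ X, w x ^ 2) :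
    ∃ S ⊆ X, #S ≤ r + 1 ∧ δ * (m - ∑ x ∈ S, w x) ≤ e := by
  classical
  have hmissing {p b : ℝ} (hp : p ≤ r) (hpb : ∑ x ∈ X, w x ^ 2 ≤ p + b * δ) :
      δ * (m - (p + b)) ≤ e := by
    have hdrop : 0 ≤ (1 - δ) * (r - p) := mul_nonneg (by linarith) (by linarith)
    have hmδ : δ * m ≤ δ * (r + δ) := mul_le_mul_of_nonneg_left hm hδ0
    linarith
  have hle_card {S : Finset α} (hS : S ⊆ X) : ∑ x ∈ S, w x ≤ #S := by
    simpa using sum_le_card_nsmul S w 1 fun x hx => hw1 x (hS hx)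
  rcases Nat.lt_or_ge r #X with hr | hr
  · obtain ⟨S, hSX, hScard, hS⟩ := exists_subset_card_eq_forall_sdiff_le w hr
    obtain ⟨y, hy, hymin⟩ := exists_min_image S w (card_pos.1 (by lia))
    have hS'X : S.erase y ⊆ X := (erase_subset y S).trans hSX
    have hS'card : #(S.erase y) = r := by rw [card_erase_of_mem hy, hScard, Nat.succ_sub_one]
    refine ⟨S, hSX, hScard.le, ?_⟩
    rw [← sum_erase_add S w hy]
    refine hmissing (hS'card ▸ hle_card hS'X) ?_
    have hthreshold := sum_sq_le_of_threshold hS'X hw0 (fun x hx => hw1 x (hS'X hx))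
      (fun x hx => hymin x (mem_of_mem_erase hx)) (b := w y) fun x hx => by
        by_cases hxS : x ∈ S
        · have hxy : x = y := by simp_all only [mem_sdiff, mem_erase, and_true, not_not]
          exact (congrArg w hxy).le
        · exact hS y hy x (mem_sdiff.2 ⟨(mem_sdiff.1 hx).1, hxS⟩)
    rw [hS'card] at hthreshold
    exact hthreshold.trans (by gcongr; exacts [hw0 y (hSX hy), by linarith])
  · have hsum_le : ∑ x ∈ X, w x ≤ r := (hle_card Subset.rfl).trans (mod_cast hr)
    refine ⟨X, Subset.rfl, by lia, ?_⟩
    have hsq_le : ∑ x ∈ X, w x ^ 2 ≤ ∑ x ∈ X, w x :=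
      sum_le_sum fun x hx => pow_le_of_le_one (hw0 x hx) (hw1 x hx) two_ne_zero
    simpa using hmissing (b := 0) hsum_le (by linarith)

end Weights

theorem sum_sum_card_filter_and {α ι : Type*} (F : Finset α) (J : Finset ι) (p : ι → α → Prop)
    [∀ j, DecidablePred (p j)] :
    ∑ A ∈ F, ∑ B ∈ F, #{j ∈ J | p j A ∧ p j B} = ∑ j ∈ J, #{A ∈ F | p j A} ^ 2 := by
  simp_rw [card_filter, sq, sum_mul_sum, ite_and, ite_mul, one_mul, zero_mul]
  rw [sum_comm (s := J)]
  exact sum_congr rfl fun A _ => sum_comm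

theorem choose_succ_le_choose_sub_add (a b j : ℕ) :
    a.choose (b + 1) ≤ (a - j).choose (b + 1) + j * (a - 1).choose b := by
  induction j with
  | zero => simp
  | succ j ih =>
    have hstep : (a - j).choose (b + 1) ≤ (a - (j + 1)).choose (b + 1) + (a - 1).choose b := by
      rcases Nat.eq_zero_or_eq_succ_pred (a - j) with h | h
      · simp [h]
      · rw [h, Nat.choose_succ_succ, show a - (j + 1) = (a - j).pred by lia, add_comm]
        gcongr
        lia
    linarith

section StarSize

/-- The size of a full `t`-star, i.e. the number of `k`-subsets of `[n]` containing a fixed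
`t`-subset (when `t ≤ k` and `t ≤ n`, so that no subtraction truncates). -/
def starSize (n k t : ℕ) : ℕ :=
  (n - t).choose (k - t)

variable {n k t : ℕ}

theorem card_fullStar {Y : Finset ℕ} (hYn : Y ⊆ Icc 1 n) (hYk : #Y ≤ k) :
    #(fullStar n k Y) = starSize n k #Y := by
  rw [fullStar, card_filter_powersetCard_subset Y _ k hYn hYk, Nat.card_Icc, Nat.add_sub_cancel,
    starSize]

theorem starSize_pos (hkn : k ≤ n) : 0 < starSize n k t :=
  Nat.choose_pos (by lia)

theorem starSize_sub_le (j : ℕ) : starSize (n - j) k t ≤ starSize n k t :=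
  Nat.choose_le_choose _ (by lia)

theorem starSize_succ_mul_le (htk : t < k) (htn : t < n) :
    starSize n k (t + 1) * n ≤ k * starSize n k t := by
  obtain ⟨a, rfl⟩ := Nat.exists_eq_add_of_lt htn
  obtain ⟨b, rfl⟩ := Nat.exists_eq_add_of_lt htk
  simp only [starSize, show t + a + 1 - t = a + 1 by lia, show t + b + 1 - t = b + 1 by lia,
    show t + a + 1 - (t + 1) = a by lia, show t + b + 1 - (t + 1) = b by lia]
  have hpascal := Nat.choose_succ_succ a b
  have habsorb := Nat.add_one_mul_choose_eq a b
  nlinarith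

theorem starSize_succ_le (htk : t < k) (htn : t < n) :
    (starSize n k (t + 1) : ℝ) ≤ k / n * starSize n k t := by
  have hn : (0 : ℝ) < n := mod_cast (Nat.zero_le t).trans_lt htn
  rw [div_mul_eq_mul_div, le_div_iff₀ hn]
  exact_mod_cast starSize_succ_mul_le htk htn

theorem one_sub_mul_starSize_le (htk : t < k) (htn : t < n) (j : ℕ) :
    (1 - j * (k / n)) * starSize n k t ≤ (starSize (n - j) k t : ℝ) := by
  have hdrop := choose_succ_le_choose_sub_add (n - t) (k - (t + 1)) j
  rw [show k - (t + 1) + 1 = k - t by lia, Nat.sub_right_comm, Nat.sub_sub n t 1] at hdrop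
  have hdrop' : (starSize n k t : ℝ) ≤ starSize (n - j) k t + j * starSize n k (t + 1) :=
    mod_cast hdrop
  have hratio := mul_le_mul_of_nonneg_left (starSize_succ_le htk htn) (Nat.cast_nonneg (α := ℝ) j)
  linarith

theorem one_sub_mul_starSize_sq_le (htk : t < k) (htn : t < n) {j r : ℕ} (hj : j ≤ r) :
    (1 - 2 * r * (k / n)) * (starSize n k t : ℝ) ^ 2 ≤ (starSize (n - j) k t : ℝ) ^ 2 := by
  have hlin := one_sub_mul_starSize_le htk htn j
  have hmono : (j : ℝ) * (k / n) * starSize n k t ≤ r * (k / n) * starSize n k t := by gcongr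
  have hmul := mul_le_mul_of_nonneg_right (show (1 - r * (k / n)) * starSize n k t ≤
    (starSize (n - j) k t : ℝ) by linarith) (Nat.cast_nonneg (α := ℝ) (starSize n k t))
  nlinarith [sq_nonneg ((starSize (n - j) k t : ℝ) - starSize n k t)]

end StarSize

section FamInt

/-- The total intersection of a set `Z` with a family `F`, so that
`totalInt F = ∑ A ∈ F, famInt F A`. -/
def famInt {α : Type*} [DecidableEq α] (F : Finset (Finset α)) (Z : Finset α) : ℕ :=
  ∑ B ∈ F, #(Z ∩ B)

/-- `F` attains `MI(F)`: it has the largest total intersection among the families of `k`-subsets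
of `[n]` of its size. -/
def IsIntOptimal (n k : ℕ) (F : Finset (Finset ℕ)) : Prop :=
  ∀ G ⊆ (Icc 1 n).powersetCard k, #G = #F → totalInt G ≤ totalInt F

theorem totalInt_eq_sum_famInt (F : Finset (Finset ℕ)) : totalInt F = ∑ A ∈ F, famInt F A :=
  rfl

theorem famInt_mono {α : Type*} [DecidableEq α] (F : Finset (Finset α)) : Monotone (famInt F) :=
  fun _ _ h => sum_le_sum fun _ _ => card_le_card (inter_subset_inter_right h)

variable {F : Finset (Finset ℕ)} {A B U Z : Finset ℕ} {n k : ℕ}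

theorem famInt_eq_sum_degF (F : Finset (Finset ℕ)) (Z : Finset ℕ) :
    famInt F Z = ∑ x ∈ Z, degF F {x} := by
  simp only [famInt, degF, singleton_subset_iff, card_filter]
  rw [sum_comm]
  exact sum_congr rfl fun B _ => by rw [← card_filter, filter_mem_eq_inter]

theorem famInt_le_card_mul (F : Finset (Finset ℕ)) (Z : Finset ℕ) : famInt F Z ≤ #Z * #F := by
  rw [famInt_eq_sum_degF]
  exact sum_le_card_nsmul _ _ _ fun x _ => card_filter_le _ _

theorem famInt_le_add_degF (F : Finset (Finset ℕ)) (Y : Finset ℕ) :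
    famInt F Y ≤ (#Y - 1) * #F + degF F Y := by
  rw [famInt, degF, card_filter, mul_comm, ← smul_eq_mul, ← sum_const, ← sum_add_distrib]
  refine sum_le_sum fun B _ => ?_
  split_ifs with hYB
  · exact (card_le_card inter_subset_left).trans (by lia)
  · have hlt : #(Y ∩ B) < #Y :=
      card_lt_card ⟨inter_subset_left, fun h => hYB (h.trans inter_subset_right)⟩
    lia

theorem nonneg_of_degF_le {D : ℝ} (hD : ∀ x ∉ U, (degF F {x} : ℝ) ≤ D) : 0 ≤ D := by
  obtain ⟨x, hx⟩ := Infinite.exists_notMem_finset U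
  exact (Nat.cast_nonneg _).trans (hD x hx)

theorem famInt_le_famInt_inter_add {D : ℝ} (hD : ∀ x ∉ U, (degF F {x} : ℝ) ≤ D) :
    (famInt F A : ℝ) ≤ famInt F (A ∩ U) + #A * D := by
  have hD0 : 0 ≤ D := nonneg_of_degF_le hD
  have houtside : ∑ x ∈ A \ U, (degF F {x} : ℝ) ≤ #A * D := calc
    _ ≤ #(A \ U) * D := by
      simpa using sum_le_card_nsmul _ _ _ fun x hx => hD x (mem_sdiff.1 hx).2
    _ ≤ #A * D := by gcongr; exact sdiff_subset
  simp only [famInt_eq_sum_degF, Nat.cast_sum]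
  rw [← sum_inter_add_sum_sdiff A U]
  gcongr

theorem totalInt_insert (hA : A ∉ F) :
    totalInt (insert A F) = totalInt F + 2 * famInt F A + #A := by
  have hrow : ∑ B ∈ F, ∑ C ∈ insert A F, #(B ∩ C) = famInt F A + totalInt F := by
    simp only [sum_insert hA, sum_add_distrib, famInt, totalInt, inter_comm A]
  rw [totalInt, sum_insert hA, hrow, sum_insert hA, inter_self, famInt]
  ring

theorem IsIntOptimal.famInt_le_famInt (hopt : IsIntOptimal n k F)
    (hF : F ⊆ (Icc 1 n).powersetCard k) (hA : A ∈ F) (hB : B ∈ (Icc 1 n).powersetCard k)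
    (hBF : B ∉ F) : famInt F B ≤ famInt F A := by
  have hBE : B ∉ F.erase A := fun h => hBF (mem_of_mem_erase h)
  have hswap := hopt (insert B (F.erase A))
    (insert_subset hB ((erase_subset A F).trans hF))
    (by rw [card_insert_of_notMem hBE, card_erase_add_one hA])
  have hback := totalInt_insert (notMem_erase A F)
  rw [insert_erase hA] at hback
  rw [totalInt_insert hBE, hback, (mem_powersetCard.1 (hF hA)).2, (mem_powersetCard.1 hB).2]
    at hswap
  have hsplit (C : Finset ℕ) : famInt F C = famInt (F.erase A) C + #(C ∩ A) :=
    (sum_erase_add F (fun D => #(C ∩ D)) hA).symm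
  have hBA : #(B ∩ A) ≤ #(A ∩ A) := card_le_card fun x hx => by simp_all only [mem_inter, and_self]
  rw [hsplit, hsplit]
  lia

theorem degF_le_starSize (hF : F ⊆ (Icc 1 n).powersetCard k) (Y : Finset ℕ) :
    degF F Y ≤ starSize n k #Y := by
  rcases (F.filter fun A => Y ⊆ A).eq_empty_or_nonempty with hY | ⟨A, hA⟩
  · simp [degF, hY]
  · obtain ⟨hAF, hYA⟩ := mem_filter.1 hA
    obtain ⟨hAn, hAk⟩ := mem_powersetCard.1 (hF hAF)
    rw [← card_fullStar (hYA.trans hAn) (hAk ▸ card_le_card hYA)]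
    exact card_le_card (filter_subset_filter _ hF)

end FamInt

section LexFamily

theorem card_mul_sq_add_sum_sq_le_totalInt {ι : Type*} {J : Finset ι}
    {g : ι → Finset (Finset ℕ)} {C : Finset ℕ} {Y : ι → Finset ℕ}
    (hg : (J : Set ι).PairwiseDisjoint g) (hCY : ∀ j ∈ J, C ⊂ Y j)
    (hY : ∀ j ∈ J, ∀ A ∈ g j, Y j ⊆ A) :
    #C * (∑ j ∈ J, #(g j)) ^ 2 + ∑ j ∈ J, #(g j) ^ 2 ≤ totalInt (J.biUnion g) := by
  set G := J.biUnion g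
  have hCG {A : Finset ℕ} (hA : A ∈ G) : C ⊆ A := by
    obtain ⟨j, hj, hAj⟩ := mem_biUnion.1 hA
    exact (hCY j hj).subset.trans (hY j hj A hAj)
  have hpieces : ∑ j ∈ J, #(g j) ^ 2 = ∑ A ∈ G, ∑ B ∈ G, #{j ∈ J | A ∈ g j ∧ B ∈ g j} := by
    rw [sum_sum_card_filter_and]
    refine sum_congr rfl fun j hj => ?_
    rw [filter_mem_eq_inter, inter_eq_right.2 (subset_biUnion_of_mem g hj)]
  have hcore : #C * (∑ j ∈ J, #(g j)) ^ 2 = ∑ _A ∈ G, ∑ _B ∈ G, #C := by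
    rw [← card_biUnion hg, sum_const, sum_const, smul_eq_mul, smul_eq_mul]
    ring
  rw [hpieces, hcore, ← sum_add_distrib]
  refine sum_le_sum fun A hA => ?_
  rw [← sum_add_distrib]
  refine sum_le_sum fun B hB => ?_
  rcases eq_empty_or_nonempty {j ∈ J | A ∈ g j ∧ B ∈ g j} with hempty | ⟨j, hj⟩
  · rw [hempty]
    exact card_le_card (subset_inter (hCG hA) (hCG hB))
  · obtain ⟨hjJ, hAj, hBj⟩ := mem_filter.1 hj
    have hone : #{j ∈ J | A ∈ g j ∧ B ∈ g j} ≤ 1 := card_le_one.2 fun i hi j hj =>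
      hg.elim_finset (mem_filter.1 hi).1 (mem_filter.1 hj).1 A
        (mem_filter.1 hi).2.1 (mem_filter.1 hj).2.1
    calc #C + #{j ∈ J | A ∈ g j ∧ B ∈ g j} ≤ #C + 1 := by gcongr
      _ ≤ #(Y j) := card_lt_card (hCY j hjJ)
      _ ≤ #(A ∩ B) := card_le_card (subset_inter (hY j hjJ A hAj) (hY j hjJ B hBj))

/-- The `j`-th block of the lexicographic order: the `k`-subsets of `[n]` containing `[t - 1]`
whose least element from `t` on is `t + j`. -/
def lexBlock (n k t j : ℕ) : Finset (Finset ℕ) :=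
  {A ∈ (Icc 1 n \ Ico t (t + j)).powersetCard k | insert (t + j) (Icc 1 (t - 1)) ⊆ A}

variable {n k t r : ℕ}

theorem card_lexBlock (ht : 0 < t) (htk : t ≤ k) {j : ℕ} (hn : t + j ≤ n) :
    #(lexBlock n k t j) = starSize (n - j) k t := by
  have hground : #(Icc 1 n \ Ico t (t + j)) = n - j := by
    rw [card_sdiff_of_subset, Nat.card_Icc, Nat.card_Ico]
    · lia
    · intro x
      simp only [mem_Ico, mem_Icc]
      lia
  have hcore : #(insert (t + j) (Icc 1 (t - 1))) = t := by
    rw [card_insert_of_notMem (by simp only [mem_Icc]; lia), Nat.card_Icc]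
    lia
  rw [lexBlock, card_filter_powersetCard_subset _ _ k, hground, hcore, starSize]
  · intro x
    simp only [mem_insert, mem_sdiff, mem_Ico, mem_Icc]
    lia
  · rwa [hcore]

theorem pairwise_disjoint_lexBlock : Pairwise (Function.onFun Disjoint (lexBlock n k t)) := by
  have hlt {i j : ℕ} (hij : i < j) : Disjoint (lexBlock n k t i) (lexBlock n k t j) := by
    refine disjoint_left.2 fun A hi hj => ?_
    have hmem := (mem_powersetCard.1 (mem_filter.1 hj).1).1
      ((mem_filter.1 hi).2 (mem_insert_self _ _))
    simp only [mem_sdiff, mem_Ico] at hmem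
    lia
  exact fun i j hij => hij.lt_or_gt.elim hlt fun h => (hlt h).symm

theorem exists_le_totalInt_of_le_starSize (ht : 0 < t) (htk : t ≤ k) (hn : t + r ≤ n)
    {c : ℕ → ℕ} (hc : ∀ j ≤ r, c j ≤ starSize (n - j) k t) :
    ∃ G ⊆ (Icc 1 n).powersetCard k, #G = ∑ j ∈ range (r + 1), c j ∧
      (t - 1) * #G ^ 2 + ∑ j ∈ range (r + 1), c j ^ 2 ≤ totalInt G := by
  have hpiece (j : ℕ) : ∃ g ⊆ lexBlock n k t j, j ≤ r → #g = c j := by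
    by_cases hj : j ≤ r
    · obtain ⟨g, hg, hgc⟩ := exists_subset_card_eq
        ((hc j hj).trans_eq (card_lexBlock ht htk (by lia)).symm)
      exact ⟨g, hg, fun _ => hgc⟩
    · exact ⟨∅, empty_subset _, fun h => absurd h hj⟩
  choose g hg hgc using hpiece
  have hgc' : ∀ j ∈ range (r + 1), #(g j) = c j := fun j hj =>
    hgc j (Nat.lt_succ_iff.1 (mem_range.1 hj))
  have hdisj : (range (r + 1) : Set ℕ).PairwiseDisjoint g := fun i _ j _ hij =>
    (pairwise_disjoint_lexBlock hij).mono (hg i) (hg j)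
  have hcard : #((range (r + 1)).biUnion g) = ∑ j ∈ range (r + 1), c j :=
    (card_biUnion hdisj).trans (sum_congr rfl hgc')
  refine ⟨(range (r + 1)).biUnion g, ?_, hcard, ?_⟩
  · refine biUnion_subset.2 fun j _ => (hg j).trans ((filter_subset _ _).trans ?_)
    exact powersetCard_mono sdiff_subset
  · have hbound := card_mul_sq_add_sum_sq_le_totalInt (C := Icc 1 (t - 1))
      (Y := fun j => insert (t + j) (Icc 1 (t - 1))) hdisj
      (fun j _ => ssubset_insert (by simp only [mem_Icc]; lia))
      fun j _ A hA => (mem_filter.1 (hg j hA)).2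
    rwa [← card_biUnion hdisj, Nat.card_Icc, Nat.add_sub_cancel,
      sum_congr rfl fun j hj => by rw [hgc' j hj]] at hbound

end LexFamily

section Size

variable {n k t r : ℕ} {F : Finset (Finset ℕ)} {δ : ℝ}

theorem sum_Icc_choose_eq_sum_starSize (ht : 0 < t) :
    ∑ i ∈ Icc t (t + r - 1), ((n - i).choose (k - t) : ℝ) =
      ∑ j ∈ range r, (starSize (n - j) k t : ℝ) := by
  rw [show Icc t (t + r - 1) = Ico t (t + r) by ext i; simp only [mem_Icc, mem_Ico]; lia,
    sum_Ico_eq_sum_range, Nat.add_sub_cancel_left]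
  simp only [starSize, Nat.sub_sub, add_comm]

theorem card_le_add_mul_starSize (hδ : 0 ≤ δ)
    (hcard : (#F : ℝ) = ∑ j ∈ range r, (starSize (n - j) k t : ℝ) + δ * starSize (n - r) k t) :
    (#F : ℝ) ≤ (r + δ) * starSize n k t := by
  have hle (j : ℕ) : (starSize (n - j) k t : ℝ) ≤ starSize n k t := mod_cast starSize_sub_le j
  have hsum : ∑ j ∈ range r, (starSize (n - j) k t : ℝ) ≤ r * starSize n k t := by
    simpa using sum_le_card_nsmul (range r) _ _ fun j _ => hle j
  have hlast := mul_le_mul_of_nonneg_left (hle r) hδ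
  linarith

theorem IsIntOptimal.add_sum_sq_le_totalInt (hopt : IsIntOptimal n k F) (ht : 0 < t)
    (htk : t ≤ k) (hn : t + r ≤ n) {c : ℕ} (hc : c ≤ starSize (n - r) k t)
    (hcard : #F = ∑ j ∈ range r, starSize (n - j) k t + c) :
    (t - 1) * #F ^ 2 + (∑ j ∈ range r, starSize (n - j) k t ^ 2 + c ^ 2) ≤ totalInt F := by
  let c' : ℕ → ℕ := fun j => if j = r then c else starSize (n - j) k t
  have hc'r : c' r = c := if_pos rfl
  have hc'range : ∀ j ∈ range r, c' j = starSize (n - j) k t := fun j hj =>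
    if_neg (mem_range.1 hj).ne
  have hc'le (j : ℕ) (_ : j ≤ r) : c' j ≤ starSize (n - j) k t := by
    by_cases hj : j = r
    · rwa [hj, hc'r]
    · exact (if_neg hj).le
  obtain ⟨G, hG, hGcard, hGint⟩ := exists_le_totalInt_of_le_starSize ht htk hn hc'le
  have hGF : #G = #F := by
    rw [hGcard, hcard, sum_range_succ, sum_congr rfl hc'range, hc'r]
  rw [hGF, sum_range_succ, hc'r,
    sum_congr rfl fun j hj => congrArg (· ^ 2) (hc'range j hj)] at hGint
  exact hGint.trans (hopt G hG hGF)

theorem IsIntOptimal.le_totalInt (hopt : IsIntOptimal n k F) (ht : 0 < t) (htk : t < k)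
    (hn : k + r ≤ n) (hδ0 : 0 ≤ δ) (hδ1 : δ ≤ 1)
    (hcard : (#F : ℝ) = ∑ j ∈ range r, (starSize (n - j) k t : ℝ) + δ * starSize (n - r) k t) :
    ((t - 1 : ℕ) : ℝ) * (#F : ℝ) ^ 2
      + (r + δ ^ 2 - 2 * (r + 1) ^ 2 * (k / n)) * (starSize n k t : ℝ) ^ 2 ≤ totalInt F := by
  obtain ⟨c, hc⟩ : ∃ c, #F = ∑ j ∈ range r, starSize (n - j) k t + c := by
    refine Nat.exists_eq_add_of_le ?_
    have hrest : 0 ≤ δ * (starSize (n - r) k t : ℝ) := by positivity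
    exact_mod_cast (le_add_of_nonneg_right hrest).trans_eq hcard.symm
  have hcδ : (c : ℝ) = δ * starSize (n - r) k t := by
    rw [hc] at hcard
    push_cast at hcard
    linarith
  have hcr : c ≤ starSize (n - r) k t := by
    exact_mod_cast hcδ.trans_le (mul_le_of_le_one_left (Nat.cast_nonneg _) hδ1)
  have hlex : ((t - 1 : ℕ) : ℝ) * (#F : ℝ) ^ 2 +
      (∑ j ∈ range r, (starSize (n - j) k t : ℝ) ^ 2 + (c : ℝ) ^ 2) ≤ totalInt F := by
    exact_mod_cast hopt.add_sum_sq_le_totalInt ht htk.le (by lia) hcr hc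
  have hsq : (r + δ ^ 2) * ((1 - 2 * r * (k / n)) * (starSize n k t : ℝ) ^ 2) ≤
      ∑ j ∈ range r, (starSize (n - j) k t : ℝ) ^ 2 + (c : ℝ) ^ 2 := by
    have hle {j : ℕ} (hj : j ≤ r) := one_sub_mul_starSize_sq_le htk (n := n) (by lia) hj
    rw [add_mul, hcδ, mul_pow]
    refine add_le_add ?_ (mul_le_mul_of_nonneg_left (hle le_rfl) (sq_nonneg δ))
    simpa using card_nsmul_le_sum (range r) _ _ fun j hj => hle (mem_range.1 hj).le
  have hloss : 2 * r * (k / n) * (r + δ ^ 2) ≤ 2 * ((r : ℝ) + 1) ^ 2 * (k / n) := by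
    have hδsq : δ ^ 2 ≤ 1 := pow_le_one₀ hδ0 hδ1
    calc 2 * r * ((k : ℝ) / n) * (r + δ ^ 2) ≤ 2 * (r + 1) * ((k : ℝ) / n) * (r + 1) := by
          gcongr; linarith
      _ = 2 * ((r : ℝ) + 1) ^ 2 * (k / n) := by ring
  have hloss' := mul_le_mul_of_nonneg_right hloss (sq_nonneg (starSize n k t : ℝ))
  linarith

end Size

section Traces

/-- The members of `F` whose trace on `H` has more than `t` elements; they are negligibly few when
`H` is bounded and `n` is large. -/
def fatPart (F : Finset (Finset ℕ)) (H : Finset ℕ) (t : ℕ) : Finset (Finset ℕ) :=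
  {A ∈ F | t < #(A ∩ H)}

variable {n k t : ℕ} {F : Finset (Finset ℕ)}

theorem card_fatPart_le (hF : F ⊆ (Icc 1 n).powersetCard k) (H : Finset ℕ) (t : ℕ) :
    #(fatPart F H t) ≤ #H ^ (t + 1) * starSize n k (t + 1) := by
  have hsub : fatPart F H t ⊆ (H.powersetCard (t + 1)).biUnion fun Z => {A ∈ F | Z ⊆ A} := by
    intro A hA
    obtain ⟨hAF, hAH⟩ := mem_filter.1 hA
    obtain ⟨Z, hZ, hZcard⟩ := exists_subset_card_eq hAH
    exact mem_biUnion.2 ⟨Z, mem_powersetCard.2 ⟨hZ.trans inter_subset_right, hZcard⟩,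
      mem_filter.2 ⟨hAF, hZ.trans inter_subset_left⟩⟩
  calc #(fatPart F H t)
      ≤ ∑ Z ∈ H.powersetCard (t + 1), degF F Z := (card_le_card hsub).trans card_biUnion_le
    _ ≤ ∑ _Z ∈ H.powersetCard (t + 1), starSize n k (t + 1) :=
        sum_le_sum fun Z hZ => (degF_le_starSize hF Z).trans_eq (by rw [(mem_powersetCard.1 hZ).2])
    _ = (#H).choose (t + 1) * starSize n k (t + 1) := by
        rw [sum_const, card_powersetCard, smul_eq_mul]
    _ ≤ #H ^ (t + 1) * starSize n k (t + 1) := by gcongr; exact Nat.choose_le_pow _ _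

theorem card_inter_inter_le {A B : Finset ℕ} (H : Finset ℕ) (hA : #(A ∩ H) ≤ t)
    (hB : #(B ∩ H) ≤ t) :
    #(A ∩ H ∩ B) ≤ t - 1 + #{Y ∈ H.powersetCard t | A ∩ H = Y ∧ B ∩ H = Y} := by
  have hsub : A ∩ H ∩ B ⊆ B ∩ H := fun x hx => by simp_all only [mem_inter, and_self]
  by_cases hlt : #(A ∩ H ∩ B) < t
  · lia
  · have hAeq := eq_of_subset_of_card_le (inter_subset_left (s₁ := A ∩ H) (s₂ := B)) (by lia)
    have hBeq := eq_of_subset_of_card_le hsub (by lia)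
    have hAt : #(A ∩ H) = t := hA.antisymm (by rw [← hAeq]; lia)
    have hpos : 0 < #{Y ∈ H.powersetCard t | A ∩ H = Y ∧ B ∩ H = Y} := card_pos.2
      ⟨A ∩ H, mem_filter.2 ⟨mem_powersetCard.2 ⟨inter_subset_right, hAt⟩, rfl,
        hBeq.symm.trans hAeq⟩⟩
    rw [hAeq]
    lia

theorem sum_famInt_inter_le (hk : ∀ A ∈ F, #A ≤ k) (H : Finset ℕ) (t : ℕ) :
    ∑ A ∈ F, famInt F (A ∩ H) ≤ (t - 1) * #F ^ 2
      + ∑ Y ∈ H.powersetCard t, #{A ∈ F | A ∩ H = Y} ^ 2 + 2 * k * #F * #(fatPart F H t) := by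
  have hconst : (t - 1) * #F ^ 2 = ∑ _A ∈ F, ∑ _B ∈ F, (t - 1) := by
    simp only [sum_const, smul_eq_mul]
    ring
  have hfat : 2 * k * #F * #(fatPart F H t) = ∑ A ∈ F, ∑ B ∈ F,
      ((if t < #(A ∩ H) then k else 0) + (if t < #(B ∩ H) then k else 0)) := by
    simp only [sum_add_distrib, sum_const, smul_eq_mul, ← mul_sum, ← sum_filter, fatPart]
    ring
  rw [← sum_sum_card_filter_and F (H.powersetCard t) fun Y A => A ∩ H = Y, hconst, hfat,
    ← sum_add_distrib, ← sum_add_distrib]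
  refine sum_le_sum fun A _ => ?_
  rw [famInt, ← sum_add_distrib, ← sum_add_distrib]
  refine sum_le_sum fun B hB => ?_
  have hle : #(A ∩ H ∩ B) ≤ k := (card_le_card inter_subset_right).trans (hk B hB)
  by_cases hAH : t < #(A ∩ H)
  · rw [if_pos hAH]
    lia
  by_cases hBH : t < #(B ∩ H)
  · rw [if_pos hBH]
    lia
  · exact (card_inter_inter_le H (not_lt.1 hAH) (not_lt.1 hBH)).trans (Nat.le_add_right _ _)

theorem totalInt_le_add_sum_sq (hk : ∀ A ∈ F, #A ≤ k) {H : Finset ℕ} {D : ℝ}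
    (hD : ∀ x ∉ H, (degF F {x} : ℝ) ≤ D) (t : ℕ) :
    (totalInt F : ℝ) ≤ ((t - 1 : ℕ) : ℝ) * (#F : ℝ) ^ 2
      + ∑ Y ∈ H.powersetCard t, (#{A ∈ F | A ∩ H = Y} : ℝ) ^ 2
      + 2 * k * #F * #(fatPart F H t) + k * D * #F := by
  have hD0 : 0 ≤ D := nonneg_of_degF_le hD
  have htrace : (∑ A ∈ F, famInt F (A ∩ H) : ℝ) ≤ ((t - 1 : ℕ) : ℝ) * (#F : ℝ) ^ 2
      + ∑ Y ∈ H.powersetCard t, (#{A ∈ F | A ∩ H = Y} : ℝ) ^ 2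
      + 2 * k * #F * #(fatPart F H t) := by
    exact_mod_cast sum_famInt_inter_le hk H t
  calc (totalInt F : ℝ) = ∑ A ∈ F, (famInt F A : ℝ) := by
        rw [totalInt_eq_sum_famInt, Nat.cast_sum]
    _ ≤ ∑ A ∈ F, ((famInt F (A ∩ H) : ℝ) + k * D) := sum_le_sum fun A hA =>
        (famInt_le_famInt_inter_add hD).trans (by gcongr; exact hk A hA)
    _ = ∑ A ∈ F, (famInt F (A ∩ H) : ℝ) + k * D * #F := by
        rw [sum_add_distrib, sum_const, nsmul_eq_mul, mul_comm (#F : ℝ)]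
    _ ≤ _ := by gcongr

theorem card_filter_inter_notMem_add (F : Finset (Finset ℕ)) (H : Finset ℕ)
    (S : Finset (Finset ℕ)) :
    #{A ∈ F | A ∩ H ∉ S} + ∑ Y ∈ S, #{A ∈ F | A ∩ H = Y} = #F := by
  rw [sum_card_fiberwise_eq_card_filter, add_comm, card_filter_add_card_filter_not]

theorem degF_le_card_filter_inter_notMem {H : Finset ℕ} {S : Finset (Finset ℕ)} {x : ℕ}
    (hxH : x ∈ H) (hxS : x ∉ S.biUnion id) : degF F {x} ≤ #{A ∈ F | A ∩ H ∉ S} :=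
  card_le_card <| monotone_filter_right F fun A _ hxA hAS =>
    hxS (mem_biUnion.2 ⟨A ∩ H, hAS, mem_inter.2 ⟨singleton_subset_iff.1 hxA, hxH⟩⟩)

variable {H : Finset ℕ} {r : ℕ} {δ θ : ℝ}

theorem le_sum_sq_card_filter_inter_eq (hF : F ⊆ (Icc 1 n).powersetCard k) (hk : 0 < k)
    (hM : (#F : ℝ) ≤ (r + 1) * starSize n k t)
    (hlow : ((t - 1 : ℕ) : ℝ) * (#F : ℝ) ^ 2
      + (r + δ ^ 2 - 2 * (r + 1) ^ 2 * (k / n)) * (starSize n k t : ℝ) ^ 2 ≤ totalInt F)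
    (hdeg : ∀ x ∉ H, (degF F {x} : ℝ) ≤ θ * #F) (hθ : 0 ≤ θ) (hn : (k / n : ℝ) ≤ θ / 4)
    (hfat : (#(fatPart F H t) : ℝ) ≤ θ / 4 * starSize n k t) :
    (r + δ ^ 2 - 2 * k * (r + 1) ^ 2 * θ) * (starSize n k t : ℝ) ^ 2 ≤
      ∑ Y ∈ H.powersetCard t, (#{A ∈ F | A ∩ H = Y} : ℝ) ^ 2 := by
  have htotal := totalInt_le_add_sum_sq (fun A hA => (mem_powersetCard.1 (hF hA)).2.le) hdeg t
  set N : ℝ := (starSize n k t : ℝ)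
  have hk' : (1 : ℝ) ≤ k := mod_cast hk
  have hr : (r + 1 : ℝ) ≤ (r + 1) ^ 2 := by nlinarith [Nat.cast_nonneg (α := ℝ) r]
  have hloss : 2 * ((r : ℝ) + 1) ^ 2 * (k / n) * N ^ 2 + 2 * k * #F * #(fatPart F H t)
      + k * (θ * #F) * #F ≤ 2 * k * (r + 1) ^ 2 * θ * N ^ 2 := calc
    _ ≤ 2 * ((r : ℝ) + 1) ^ 2 * (θ / 4) * N ^ 2 + 2 * k * ((r + 1) * N) * (θ / 4 * N)
        + k * (θ * ((r + 1) * N)) * ((r + 1) * N) := by gcongr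
    _ = ((r + 1) ^ 2 / 2 + k * (r + 1) / 2 + k * (r + 1) ^ 2) * (θ * N ^ 2) := by ring
    _ ≤ (k * (r + 1) ^ 2 / 2 + k * (r + 1) ^ 2 / 2 + k * (r + 1) ^ 2) * (θ * N ^ 2) := by
      gcongr
      exact le_mul_of_one_le_left (by positivity) hk'
    _ = _ := by ring
  linarith

theorem exists_card_filter_inter_notMem_le {e : ℝ} (hF : F ⊆ (Icc 1 n).powersetCard k)
    (hkn : k ≤ n) (hδ0 : 0 ≤ δ) (hδ1 : δ ≤ 1) (hM : (#F : ℝ) ≤ (r + δ) * starSize n k t)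
    (hsq : (r + δ ^ 2 - e) * (starSize n k t : ℝ) ^ 2 ≤
      ∑ Y ∈ H.powersetCard t, (#{A ∈ F | A ∩ H = Y} : ℝ) ^ 2) :
    ∃ S ⊆ H.powersetCard t, #S ≤ r + 1 ∧ δ * #{A ∈ F | A ∩ H ∉ S} ≤ e * starSize n k t := by
  have hN : (0 : ℝ) < starSize n k t := mod_cast starSize_pos hkn
  set N : ℝ := (starSize n k t : ℝ) with hNdef
  have hw1 : ∀ Y ∈ H.powersetCard t, (#{A ∈ F | A ∩ H = Y} : ℝ) / N ≤ 1 := fun Y hY => by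
    rw [div_le_one hN, hNdef, Nat.cast_le, ← (mem_powersetCard.1 hY).2]
    refine (card_le_card (monotone_filter_right F fun A _ hA => ?_)).trans
      (degF_le_starSize hF Y)
    exact hA ▸ inter_subset_left
  have hpart (S : Finset (Finset ℕ)) :
      (#{A ∈ F | A ∩ H ∉ S} : ℝ) + ∑ Y ∈ S, (#{A ∈ F | A ∩ H = Y} : ℝ) = #F := by
    exact_mod_cast card_filter_inter_notMem_add F H S
  have hsum : ∑ Y ∈ H.powersetCard t, (#{A ∈ F | A ∩ H = Y} : ℝ) / N ≤ #F / N := by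
    rw [← sum_div, ← hpart (H.powersetCard t)]
    gcongr
    exact le_add_of_nonneg_left (Nat.cast_nonneg _)
  have hsq' : r + δ ^ 2 - e ≤ ∑ Y ∈ H.powersetCard t, ((#{A ∈ F | A ∩ H = Y} : ℝ) / N) ^ 2 := by
    simp only [div_pow]
    rwa [← sum_div, le_div_iff₀ (by positivity)]
  obtain ⟨S, hSH, hS, hmass⟩ := exists_subset_card_le_mul_sub_sum_le hδ0 hδ1
    (fun Y _ => by positivity) hw1 ((div_le_iff₀ hN).2 hM) hsum hsq'
  refine ⟨S, hSH, hS, ?_⟩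
  rwa [← sum_div, ← sub_div, ← hpart S, add_sub_cancel_right, mul_div_assoc', div_le_iff₀ hN]
    at hmass

end Traces

section Heavy

/-- The points of degree at least `θ * #F`, which carry all but a small part of every intersection.
Only points covered by `F` are taken, so that the set is finite for every `θ`. -/
noncomputable def heavy (F : Finset (Finset ℕ)) (θ : ℝ) : Finset ℕ :=
  {x ∈ F.biUnion id | θ * #F ≤ degF F {x}}

variable {n k : ℕ} {F : Finset (Finset ℕ)} {θ : ℝ} {x : ℕ}

theorem heavy_subset (hF : F ⊆ (Icc 1 n).powersetCard k) : heavy F θ ⊆ Icc 1 n :=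
  (filter_subset _ _).trans (biUnion_subset.2 fun _ hA => (mem_powersetCard.1 (hF hA)).1)

theorem degF_le_of_notMem_heavy (hθ : 0 ≤ θ) (hx : x ∉ heavy F θ) :
    (degF F {x} : ℝ) ≤ θ * #F := by
  by_cases hxF : x ∈ F.biUnion id
  · exact le_of_not_ge fun h => hx (mem_filter.2 ⟨hxF, h⟩)
  · have hzero : degF F {x} = 0 := card_eq_zero.2 <| filter_eq_empty_iff.2 fun A hA hxA =>
      hxF (mem_biUnion.2 ⟨A, hA, singleton_subset_iff.1 hxA⟩)
    rw [hzero, Nat.cast_zero]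
    positivity

theorem card_heavy_mul_le (hk : ∀ A ∈ F, #A ≤ k) (hF : F.Nonempty) : #(heavy F θ) * θ ≤ k := by
  have hpos : (0 : ℝ) < #F := mod_cast hF.card_pos
  have hsum : famInt F (heavy F θ) ≤ #F * k := sum_le_card_nsmul _ _ _ fun B hB =>
    (card_le_card inter_subset_right).trans (hk B hB)
  refine le_of_mul_le_mul_right ?_ hpos
  calc #(heavy F θ) * θ * #F = #(heavy F θ) • (θ * #F) := by rw [nsmul_eq_mul, mul_assoc]
    _ ≤ ∑ x ∈ heavy F θ, (degF F {x} : ℝ) :=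
        card_nsmul_le_sum _ _ _ fun x hx => (mem_filter.1 hx).2
    _ ≤ k * #F := by
        rw [mul_comm]
        exact_mod_cast famInt_eq_sum_degF F _ ▸ hsum

end Heavy

section FullStars

/-- The cores of the full `t`-stars contained in `F`. -/
def fullCores (n k t : ℕ) (F : Finset (Finset ℕ)) : Finset (Finset ℕ) :=
  {Y ∈ (Icc 1 n).powersetCard t | fullStar n k Y ⊆ F}

/-- The members of `F` lying in some full `t`-star contained in `F`: those that need not obey the
exchange bound `IsIntOptimal.famInt_le_of_notMem_starMembers`. -/
def starMembers (n k t : ℕ) (F : Finset (Finset ℕ)) : Finset (Finset ℕ) :=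
  {A ∈ F | ∃ Y ∈ fullCores n k t F, Y ⊆ A}

variable {n k t : ℕ} {F : Finset (Finset ℕ)} {H U A A₀ : Finset ℕ} {D : ℝ}

theorem card_starMembers_le (hF : F ⊆ (Icc 1 n).powersetCard k) :
    #(starMembers n k t F) ≤ #(fullCores n k t F) * starSize n k t := by
  have hsub : starMembers n k t F ⊆ (fullCores n k t F).biUnion fun Y => {A ∈ F | Y ⊆ A} := by
    intro A hA
    obtain ⟨hAF, Y, hY, hYA⟩ := mem_filter.1 hA
    exact mem_biUnion.2 ⟨Y, hY, mem_filter.2 ⟨hAF, hYA⟩⟩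
  refine (card_le_card hsub).trans (card_biUnion_le_card_mul _ _ _ fun Y hY => ?_)
  rw [← (mem_powersetCard.1 (mem_filter.1 hY).1).2]
  exact degF_le_starSize hF Y

theorem famInt_le_of_card_inter_lt (hD : ∀ x ∉ U, (degF F {x} : ℝ) ≤ D) (hA : #A ≤ k)
    (hAU : #(A ∩ U) < t) : (famInt F A : ℝ) ≤ ((t - 1 : ℕ) : ℝ) * #F + k * D := by
  have hD0 : 0 ≤ D := nonneg_of_degF_le hD
  have hcore : famInt F (A ∩ U) ≤ (t - 1) * #F :=
    (famInt_le_card_mul F _).trans (by gcongr; lia)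
  refine (famInt_le_famInt_inter_add hD).trans (add_le_add (mod_cast hcore) ?_)
  gcongr

theorem famInt_le_of_card_inter_eq (hF : F ⊆ (Icc 1 n).powersetCard k)
    (hD : ∀ x ∉ U, (degF F {x} : ℝ) ≤ D) (hA : #A ≤ k) (hAU : #(A ∩ U) = t) :
    (famInt F A : ℝ) ≤ ((t - 1 : ℕ) : ℝ) * #F + k * D + starSize n k t := by
  have hD0 : 0 ≤ D := nonneg_of_degF_le hD
  have hcore : famInt F (A ∩ U) ≤ (t - 1) * #F + starSize n k t :=
    hAU ▸ (famInt_le_add_degF F _).trans (by gcongr; exact degF_le_starSize hF _)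
  have hcore' : (famInt F (A ∩ U) : ℝ) ≤ ((t - 1 : ℕ) : ℝ) * #F + starSize n k t :=
    mod_cast hcore
  have hAD : (#A : ℝ) * D ≤ k * D := by gcongr
  linarith [famInt_le_famInt_inter_add (A := A) hD]

/- If the star with core `A ∩ U` is not full, then a missing member of it could replace `A₀`, so
optimality bounds `A ∩ U` by `A₀`. -/
theorem IsIntOptimal.famInt_le_of_notMem_starMembers (hopt : IsIntOptimal n k F)
    (hF : F ⊆ (Icc 1 n).powersetCard k) (hD : ∀ x ∉ U, (degF F {x} : ℝ) ≤ D) (hA₀ : A₀ ∈ F)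
    (hA₀U : #(A₀ ∩ U) < t) (hA : A ∈ F) (hAU : #(A ∩ U) = t) (hstar : A ∉ starMembers n k t F) :
    (famInt F A : ℝ) ≤ ((t - 1 : ℕ) : ℝ) * #F + 2 * (k * D) := by
  obtain ⟨hAn, hAk⟩ := mem_powersetCard.1 (hF hA)
  have hnotfull : ¬ fullStar n k (A ∩ U) ⊆ F := fun h => hstar <| mem_filter.2
    ⟨hA, A ∩ U, mem_filter.2 ⟨mem_powersetCard.2 ⟨inter_subset_left.trans hAn, hAU⟩, h⟩,
      inter_subset_left⟩
  obtain ⟨B, hB, hBF⟩ := not_subset.1 hnotfull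
  obtain ⟨hBk, hUB⟩ := mem_filter.1 hB
  have hcore : (famInt F (A ∩ U) : ℝ) ≤ famInt F A₀ :=
    mod_cast (famInt_mono F hUB).trans (hopt.famInt_le_famInt hF hA₀ hBk hBF)
  have hA₀' := famInt_le_of_card_inter_lt hD (mem_powersetCard.1 (hF hA₀)).2.le hA₀U
  have hAD := famInt_le_famInt_inter_add (A := A) hD
  rw [hAk] at hAD
  linarith

theorem IsIntOptimal.totalInt_le (hopt : IsIntOptimal n k F) (hF : F ⊆ (Icc 1 n).powersetCard k)
    (hUH : U ⊆ H) (hD : ∀ x ∉ U, (degF F {x} : ℝ) ≤ D) (hA₀ : A₀ ∈ F) (hA₀U : #(A₀ ∩ U) < t) :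
    (totalInt F : ℝ) ≤ ((t - 1 : ℕ) : ℝ) * (#F : ℝ) ^ 2 + 2 * k * D * #F
      + k * #F * #(fatPart F H t) + #(starMembers n k t F) * starSize n k t := by
  have hD0 : 0 ≤ D := nonneg_of_degF_le hD
  have hpoint : ∀ A ∈ F, (famInt F A : ℝ) ≤ ((t - 1 : ℕ) : ℝ) * #F + 2 * (k * D)
      + (if t < #(A ∩ H) then (k : ℝ) * #F else 0)
      + (if ∃ Y ∈ fullCores n k t F, Y ⊆ A then (starSize n k t : ℝ) else 0) := by
    intro A hA
    have hAk := (mem_powersetCard.1 (hF hA)).2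
    have hkD : 0 ≤ k * D := by positivity
    have hstar0 : 0 ≤ if ∃ Y ∈ fullCores n k t F, Y ⊆ A then (starSize n k t : ℝ) else 0 := by
      positivity
    by_cases hfat : t < #(A ∩ H)
    · have hle : (famInt F A : ℝ) ≤ k * #F := mod_cast hAk ▸ famInt_le_card_mul F A
      have ht0 : 0 ≤ ((t - 1 : ℕ) : ℝ) * #F := by positivity
      rw [if_pos hfat]
      linarith
    rw [if_neg hfat]
    rcases lt_or_ge #(A ∩ U) t with hlt | hge
    · linarith [famInt_le_of_card_inter_lt hD hAk.le hlt]
    have hAU : #(A ∩ U) = t :=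
      le_antisymm ((card_le_card (inter_subset_inter_left hUH)).trans (not_lt.1 hfat)) hge
    by_cases hstar : ∃ Y ∈ fullCores n k t F, Y ⊆ A
    · rw [if_pos hstar]
      linarith [famInt_le_of_card_inter_eq hF hD hAk.le hAU]
    · linarith [hopt.famInt_le_of_notMem_starMembers hF hD hA₀ hA₀U hA hAU
        fun h => hstar (mem_filter.1 h).2]
  rw [totalInt_eq_sum_famInt, Nat.cast_sum]
  refine (sum_le_sum hpoint).trans_eq ?_
  simp only [sum_add_distrib, ← sum_filter, sum_const, nsmul_eq_mul, fatPart, starMembers]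
  ring

end FullStars

section Cover

variable {n k t r : ℕ} {F : Finset (Finset ℕ)} {b δ θ : ℝ}

theorem card_fatPart_heavy_le (hF : F ⊆ (Icc 1 n).powersetCard k) (htk : t < k) (hkn : k ≤ n)
    (hb : 0 < b) (hn : 4 * b ^ (3 * t + 6) ≤ n) :
    (#(fatPart F (heavy F (k / b ^ 3)) t) : ℝ) ≤ k / b ^ 3 / 4 * starSize n k t := by
  rcases F.eq_empty_or_nonempty with rfl | hne
  · simp only [fatPart, filter_empty, card_empty, Nat.cast_zero]
    positivity
  have hk0 : (0 : ℝ) < k := mod_cast (Nat.zero_le t).trans_lt htk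
  have hn0 : (0 : ℝ) < n := (by positivity : 0 < 4 * b ^ (3 * t + 6)).trans_le hn
  have hheavy : (#(heavy F (k / b ^ 3)) : ℝ) ≤ b ^ 3 := by
    have hmul := card_heavy_mul_le (θ := k / b ^ 3)
      (fun A hA => (mem_powersetCard.1 (hF hA)).2.le) hne
    rwa [mul_div_assoc', div_le_iff₀ (by positivity), mul_comm, mul_le_mul_iff_right₀ hk0]
      at hmul
  have hratio : (b ^ 3) ^ (t + 1) * (k / n) ≤ k / b ^ 3 / 4 := by
    rw [div_div, mul_div_assoc', div_le_div_iff₀ hn0 (by positivity)]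
    calc (b ^ 3) ^ (t + 1) * k * (b ^ 3 * 4) = k * (4 * b ^ (3 * t + 6)) := by ring
      _ ≤ k * n := by gcongr
  calc (#(fatPart F (heavy F (k / b ^ 3)) t) : ℝ)
      ≤ #(heavy F (k / b ^ 3)) ^ (t + 1) * starSize n k (t + 1) :=
        mod_cast card_fatPart_le hF _ t
    _ ≤ (b ^ 3) ^ (t + 1) * (k / n * starSize n k t) := by
        gcongr
        exact starSize_succ_le htk (htk.trans_le hkn)
    _ = (b ^ 3) ^ (t + 1) * (k / n) * starSize n k t := by ring
    _ ≤ _ := by gcongr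

theorem exists_subset_heavy_forall_degF_le (hF : F ⊆ (Icc 1 n).powersetCard k) (hk : 0 < k)
    (hkn : k ≤ n) (hδ0 : 0 < δ) (hδ1 : δ ≤ 1) (hθ : 0 ≤ θ)
    (hM : (#F : ℝ) ≤ (r + δ) * starSize n k t)
    (hlow : ((t - 1 : ℕ) : ℝ) * (#F : ℝ) ^ 2
      + (r + δ ^ 2 - 2 * (r + 1) ^ 2 * (k / n)) * (starSize n k t : ℝ) ^ 2 ≤ totalInt F)
    (hn : (k / n : ℝ) ≤ θ / 4)
    (hfat : (#(fatPart F (heavy F θ) t) : ℝ) ≤ θ / 4 * starSize n k t) :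
    ∃ U ⊆ heavy F θ, #U ≤ t * (r + 1) ∧
      ∀ x ∉ U, (degF F {x} : ℝ) ≤ 2 * k * (r + 1) ^ 2 * θ * starSize n k t / δ := by
  have hM' : (#F : ℝ) ≤ (r + 1) * starSize n k t := hM.trans (by gcongr)
  have hsq := le_sum_sq_card_filter_inter_eq hF hk hM' hlow
    (fun x hx => degF_le_of_notMem_heavy hθ hx) hθ hn hfat
  obtain ⟨S, hSH, hS, hrest⟩ := exists_card_filter_inter_notMem_le hF hkn hδ0.le hδ1 hM hsq
  refine ⟨S.biUnion id, biUnion_subset.2 fun Y hY => (mem_powersetCard.1 (hSH hY)).1, ?_, ?_⟩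
  · rw [mul_comm]
    exact (card_biUnion_le_card_mul S id t fun Y hY => (mem_powersetCard.1 (hSH hY)).2.le).trans
      (by gcongr)
  intro x hx
  rw [le_div_iff₀ hδ0]
  by_cases hxH : x ∈ heavy F θ
  · have hdeg : (degF F {x} : ℝ) ≤ #{A ∈ F | A ∩ heavy F θ ∉ S} :=
      mod_cast degF_le_card_filter_inter_notMem hxH hx
    rw [mul_comm]
    exact (mul_le_mul_of_nonneg_left hdeg hδ0.le).trans hrest
  · have hkr : (r + 1 : ℝ) ≤ 2 * k * (r + 1) ^ 2 := by
      have hk' : (1 : ℝ) ≤ k := mod_cast hk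
      nlinarith [Nat.cast_nonneg (α := ℝ) r, mul_le_mul_of_nonneg_right hk' (sq_nonneg (r + 1 : ℝ))]
    calc (degF F {x} : ℝ) * δ ≤ θ * #F * 1 := by
          gcongr
          exact degF_le_of_notMem_heavy hθ hxH
      _ ≤ θ * ((r + 1) * starSize n k t) := by rw [mul_one]; gcongr
      _ = (r + 1) * (θ * starSize n k t) := by ring
      _ ≤ 2 * k * (r + 1) ^ 2 * (θ * starSize n k t) := by gcongr
      _ = _ := by ring

theorem error_terms_lt_sq (hk : 1 ≤ k) (hδ0 : 0 < δ) (hδ1 : δ ≤ 1)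
    (hθ : 8 * k ^ 2 * (r + 1) ^ 3 * θ = δ ^ 3) (hθ0 : 0 ≤ θ) :
    2 * (r + 1) ^ 2 * (θ / 4) + 4 * k ^ 2 * (r + 1) ^ 3 * θ / δ + k * (r + 1) * (θ / 4) <
      δ ^ 2 := by
  have hk' : (1 : ℝ) ≤ k := mod_cast hk
  have hr : (1 : ℝ) ≤ r + 1 := le_add_of_nonneg_left (Nat.cast_nonneg r)
  have hmid : 4 * k ^ 2 * (r + 1) ^ 3 * θ / δ = δ ^ 2 / 2 := by
    rw [div_eq_iff hδ0.ne']
    linarith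
  have hleft : 2 * (r + 1) ^ 2 * (θ / 4) ≤ δ ^ 3 / 16 := calc
    2 * ((r : ℝ) + 1) ^ 2 * (θ / 4) = 1 ^ 2 * (r + 1) ^ 2 * (θ / 2) := by ring
    _ ≤ k ^ 2 * (r + 1) ^ 3 * (θ / 2) := by gcongr; norm_num
    _ = δ ^ 3 / 16 := by linarith
  have hright : k * (r + 1) * (θ / 4) ≤ δ ^ 3 / 32 := calc
    (k : ℝ) * (r + 1) * (θ / 4) ≤ k ^ 2 * (r + 1) ^ 3 * (θ / 4) := by
      gcongr <;> exact le_self_pow₀ ‹_› (by norm_num)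
    _ = δ ^ 3 / 32 := by linarith
  have hcube : δ ^ 3 ≤ δ ^ 2 := pow_le_pow_of_le_one hδ0.le hδ1 (by norm_num)
  linarith [pow_pos hδ0 2]

theorem error_lt_sq_mul_sq {q M f N : ℝ} (hk : 1 ≤ k) (hδ0 : 0 < δ) (hδ1 : δ ≤ 1)
    (hθ : 8 * k ^ 2 * (r + 1) ^ 3 * θ = δ ^ 3) (hN : 0 < N) (hM : M ≤ (r + 1) * N)
    (hq : q ≤ θ / 4) (hf0 : 0 ≤ f) (hf : f ≤ θ / 4 * N) :
    2 * (r + 1) ^ 2 * q * N ^ 2 + 2 * k * (2 * k * (r + 1) ^ 2 * θ * N / δ) * M + k * M * f <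
      δ ^ 2 * N ^ 2 := by
  have hθ0 : 0 ≤ θ := by
    refine nonneg_of_mul_nonneg_right (a := 8 * (k : ℝ) ^ 2 * (r + 1) ^ 3) ?_ (by positivity)
    rw [hθ]
    positivity
  calc _ ≤ 2 * (r + 1) ^ 2 * (θ / 4) * N ^ 2
        + 2 * k * (2 * k * (r + 1) ^ 2 * θ * N / δ) * ((r + 1) * N)
        + k * ((r + 1) * N) * (θ / 4 * N) := by gcongr
    _ = (2 * (r + 1) ^ 2 * (θ / 4) + 4 * k ^ 2 * (r + 1) ^ 3 * θ / δ + k * (r + 1) * (θ / 4))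
        * N ^ 2 := by ring
    _ < δ ^ 2 * N ^ 2 := by
      gcongr
      exact error_terms_lt_sq hk hδ0 hδ1 hθ hθ0

theorem add_add_le_of_four_mul_pow_le (hk : 1 ≤ k) (hδ0 : 0 < δ) (hδ1 : δ ≤ 1)
    (hn : 4 * (2 * k * (r + 1) / δ) ^ (3 * t + 6) ≤ n) : k + r + t ≤ n := by
  have hk' : (1 : ℝ) ≤ k := mod_cast hk
  have hb : 2 * k * (r + 1) ≤ 2 * k * (r + 1) / δ := le_div_self (by positivity) hδ0 hδ1
  set b := 2 * k * (r + 1) / δ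
  have hb2 : 2 ≤ b := by nlinarith
  have hbt : (t + 1 : ℝ) ≤ b ^ t := calc
    (t + 1 : ℝ) ≤ 2 ^ t := mod_cast Nat.lt_two_pow_self
    _ ≤ b ^ t := by gcongr
  have hmain : (k + r + t : ℝ) ≤ n := calc
    (k + r + t : ℝ) ≤ b * (t + 1) := by nlinarith [Nat.cast_nonneg (α := ℝ) t]
    _ ≤ b * b ^ t := by gcongr
    _ = b ^ (t + 1) := by ring
    _ ≤ b ^ (3 * t + 6) := pow_le_pow_right₀ (by linarith) (by lia)
    _ ≤ 4 * b ^ (3 * t + 6) := le_mul_of_one_le_left (by positivity) (by norm_num)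
    _ ≤ n := hn
  exact_mod_cast hmain

theorem IsIntOptimal.exists_cover_of_card_fullCores_le (hopt : IsIntOptimal n k F)
    (hF : F ⊆ (Icc 1 n).powersetCard k) (ht : 0 < t) (htk : t < k) (hδ0 : 0 < δ) (hδ1 : δ ≤ 1)
    (hn : 4 * (2 * k * (r + 1) / δ) ^ (3 * t + 6) ≤ n)
    (hcard : (#F : ℝ) = ∑ j ∈ range r, (starSize (n - j) k t : ℝ) + δ * starSize (n - r) k t)
    (hcores : #(fullCores n k t F) ≤ r) :
    ∃ U ⊆ Icc 1 n, #U ≤ t * (r + 1) ∧ ∀ A ∈ F, t ≤ #(A ∩ U) := by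
  have hk : 0 < k := (Nat.zero_le t).trans_lt htk
  have hnsum := add_add_le_of_four_mul_pow_le hk hδ0 hδ1 hn
  have hkn : k ≤ n := by lia
  set b := 2 * k * (r + 1) / δ with hb
  set θ := k / b ^ 3 with hθ
  have hb0 : 0 < b := by positivity
  have hθδ : 8 * k ^ 2 * (r + 1) ^ 3 * θ = δ ^ 3 := by
    rw [hθ, hb]
    field_simp
    norm_num
  have hratio : (k / n : ℝ) ≤ θ / 4 := by
    rw [hθ, div_div]
    have hb1 : 1 ≤ b := (one_le_div hδ0).2 <| hδ1.trans <| mod_cast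
      (by positivity : 0 < 2 * k * (r + 1))
    gcongr
    calc b ^ 3 * 4 ≤ 4 * b ^ (3 * t + 6) := by
          rw [mul_comm]
          gcongr
          lia
      _ ≤ n := hn
  have hfat := card_fatPart_heavy_le hF htk hkn hb0 hn
  have hM := card_le_add_mul_starSize hδ0.le hcard
  have hlow := hopt.le_totalInt ht htk (by lia) hδ0.le hδ1 hcard
  obtain ⟨U, hUH, hU, hdeg⟩ := exists_subset_heavy_forall_degF_le hF hk hkn hδ0 hδ1
    (by positivity) hM hlow hratio hfat
  refine ⟨U, hUH.trans (heavy_subset hF), hU, ?_⟩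
  by_contra! ⟨A₀, hA₀, hA₀U⟩
  have hhigh := hopt.totalInt_le hF hUH hdeg hA₀ hA₀U
  have hstar : (#(starMembers n k t F) : ℝ) ≤ r * starSize n k t :=
    mod_cast (card_starMembers_le hF).trans (by gcongr)
  have hN : (0 : ℝ) < starSize n k t := mod_cast starSize_pos hkn
  have hM' : (#F : ℝ) ≤ (r + 1) * starSize n k t := hM.trans (by gcongr)
  set N : ℝ := (starSize n k t : ℝ)
  have herror := error_lt_sq_mul_sq hk hδ0 hδ1 hθδ hN hM' hratio (Nat.cast_nonneg _) hfat
  have hstarN : #(starMembers n k t F) * N ≤ r * N * N := by gcongr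
  linarith

end Cover

section SmallCores

variable {n k t : ℕ} {F : Finset (Finset ℕ)}

theorem lt_choose_of_add_lt {s : ℕ} (ht : 0 < t) (hs : s + t ≤ n) : s < n.choose t := calc
  s < (1 + s).choose s := by rw [add_comm, Nat.choose_succ_self_right]; exact Nat.lt_succ_self s
  _ ≤ (s + t).choose s := Nat.choose_le_choose _ (by lia)
  _ = (s + t).choose t := Nat.choose_symm_add
  _ ≤ n.choose t := Nat.choose_le_choose _ hs

theorem fullStar_eq_empty_of_card_lt {Y : Finset ℕ} (hY : k < #Y) : fullStar n k Y = ∅ :=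
  filter_eq_empty_iff.2 fun _ hA hYA =>
    (card_le_card hYA).not_gt ((mem_powersetCard.1 hA).2 ▸ hY)

theorem card_fullCores_of_lt (hkt : k < t) : #(fullCores n k t F) = n.choose t := by
  rw [fullCores, filter_true_of_mem, card_powersetCard, Nat.card_Icc, Nat.add_sub_cancel]
  intro Y hY
  rw [fullStar_eq_empty_of_card_lt (by rwa [(mem_powersetCard.1 hY).2])]
  exact empty_subset F

theorem fullStar_card_self {Y : Finset ℕ} (hY : Y ⊆ Icc 1 n) : fullStar n #Y Y = {Y} := by
  ext A
  simp only [fullStar, mem_filter, mem_powersetCard, mem_singleton]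
  refine ⟨fun ⟨⟨_, hA⟩, hYA⟩ => (eq_of_subset_of_card_le hYA hA.le).symm, ?_⟩
  rintro rfl
  exact ⟨⟨hY, rfl⟩, Subset.rfl⟩

theorem subset_fullCores_self (hF : F ⊆ (Icc 1 n).powersetCard k) : F ⊆ fullCores n k k F := by
  intro A hA
  obtain ⟨hAn, rfl⟩ := mem_powersetCard.1 (hF hA)
  exact mem_filter.2 ⟨hF hA, by rwa [fullStar_card_self hAn, singleton_subset_iff]⟩

theorem card_fullCores_le_one (hF : ∀ Y₁ Y₂ : Finset ℕ, Y₁ ∈ (Icc 1 n).powersetCard t →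
    Y₂ ∈ (Icc 1 n).powersetCard t → fullStar n k Y₁ ⊆ F → fullStar n k Y₂ ⊆ F → Y₁ = Y₂) :
    #(fullCores n k t F) ≤ 1 := by
  refine card_le_one.2 fun Y₁ hY₁ Y₂ hY₂ => ?_
  obtain ⟨hY₁t, hY₁F⟩ := mem_filter.1 hY₁
  obtain ⟨hY₂t, hY₂F⟩ := mem_filter.1 hY₂
  exact hF Y₁ Y₂ hY₁t hY₂t hY₁F hY₂F

theorem exists_cover_of_mem_fullCores {Y : Finset ℕ} (hY : Y ∈ fullCores n k t F) (htk : t ≤ k)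
    (hcard : #F ≤ starSize n k t) : ∃ U ⊆ Icc 1 n, #U ≤ t ∧ ∀ A ∈ F, t ≤ #(A ∩ U) := by
  obtain ⟨hYt, hYF⟩ := mem_filter.1 hY
  obtain ⟨hYn, rfl⟩ := mem_powersetCard.1 hYt
  refine ⟨Y, hYn, le_rfl, fun A hA => ?_⟩
  rw [← eq_of_subset_of_card_le hYF (hcard.trans (card_fullStar hYn htk).ge)] at hA
  rw [inter_eq_right.2 (mem_filter.1 hA).2]

theorem exists_cover_of_card_le {m : ℕ} (hF : F ⊆ (Icc 1 n).powersetCard k) (hm : #F ≤ m) :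
    ∃ U ⊆ Icc 1 n, #U ≤ k * m ∧ ∀ A ∈ F, k ≤ #(A ∩ U) := by
  refine ⟨F.biUnion id, biUnion_subset.2 fun A hA => (mem_powersetCard.1 (hF hA)).1, ?_, ?_⟩
  · rw [mul_comm]
    exact (card_biUnion_le_card_mul F id k fun A hA => (mem_powersetCard.1 (hF hA)).2.le).trans
      (by gcongr)
  · intro A hA
    have hAU : A ⊆ F.biUnion id := subset_biUnion_of_mem id hA
    rw [inter_eq_left.2 hAU, (mem_powersetCard.1 (hF hA)).2]

end SmallCores

section Constants

variable {k t r : ℕ} {δ : ℝ}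

theorem div_Cconst_one (hk : 0 < k) (ht : 0 < t) :
    60 * (k : ℝ) ^ 2 * ((r : ℝ) + 1) ^ 6 * (t : ℝ) ^ 4 / (Cconst k t r 1 : ℝ) =
      6 / (10 ^ 5 * (r + 1)) := by
  have hC : (Cconst k t r 1 : ℝ) = 10 ^ 6 * (k ^ 2 * t ^ 4 * (r + 1) ^ 7) := by
    norm_num [Cconst]
  rw [hC]
  field_simp
  norm_num

theorem div_le_and_le_one_of_Cconst (hk : 0 < k) (ht : 0 < t)
    (hδ : (60 * (k : ℝ) ^ 2 * ((r : ℝ) + 1) ^ 6 * (t : ℝ) ^ 4 / (Cconst k t r 1 : ℝ) ≤ δ ∧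
      δ ≤ 1 - 60 * (k : ℝ) ^ 2 * ((r : ℝ) + 1) ^ 6 * (t : ℝ) ^ 4 / (Cconst k t r 1 : ℝ)) ∨ δ = 1) :
    6 / (10 ^ 5 * ((r : ℝ) + 1)) ≤ δ ∧ δ ≤ 1 := by
  rw [div_Cconst_one hk ht] at hδ
  rcases hδ with ⟨hlow, hhigh⟩ | rfl
  · exact ⟨hlow, hhigh.trans (sub_le_self 1 (by positivity))⟩
  · refine ⟨(div_le_one (by positivity)).2 ?_, le_rfl⟩
    linarith [Nat.cast_nonneg (α := ℝ) r]

theorem Cconst_pos (hk : 0 < k) (ht : 0 < t) (s : ℕ) : 0 < Cconst k t r s := by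
  unfold Cconst
  positivity

theorem four_le_Cconst_one (hk : 0 < k) (ht : 0 < t) : 4 ≤ Cconst k t r 1 := by
  have hpos : 0 < k ^ 2 * t ^ 4 * (r + 1) ^ 7 := by positivity
  norm_num [Cconst]
  lia

theorem le_Cconst_self (hk : 0 < k) (ht : 2 ≤ t) :
    10 ^ 14 * (k ^ 2 * (r + 1) ^ 7) ^ 2 ≤ Cconst k t r t := by
  have hexp : 2 ^ 1 ≤ 2 ^ (t - 1) := Nat.pow_le_pow_right two_pos (by lia)
  have hexp' : 2 ^ 4 ≤ 2 ^ (t + 2) := Nat.pow_le_pow_right two_pos (by lia)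
  calc 10 ^ 14 * (k ^ 2 * (r + 1) ^ 7) ^ 2
      = 1 * 10 ^ 14 * (k ^ 2 * 1 * (r + 1) ^ 7) ^ 2 := by ring
    _ ≤ 2 ^ (2 ^ (t - 1) - 1) * 10 ^ (2 ^ (t + 2) - 2) * (k ^ 2 * t ^ 4 * (r + 1) ^ 7) ^ 2 := by
        gcongr
        · exact Nat.one_le_two_pow
        · norm_num
        · lia
        · exact Nat.one_le_pow _ _ (by lia)
    _ ≤ Cconst k t r t := by
        unfold Cconst
        gcongr
        · exact Nat.one_le_iff_ne_zero.2 (by positivity)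
        · simpa using hexp

theorem pos_of_div_le (hδ : 6 / (10 ^ 5 * ((r : ℝ) + 1)) ≤ δ) : 0 < δ :=
  (by positivity : 0 < 6 / (10 ^ 5 * ((r : ℝ) + 1))).trans_le hδ

theorem four_mul_pow_le_Cconst_mul_pow (hk : 0 < k) (ht : 2 ≤ t)
    (hδ : 6 / (10 ^ 5 * (r + 1)) ≤ δ) :
    4 * (2 * k * (r + 1) / δ) ^ (3 * t + 6) ≤
      (Cconst k t r 1 : ℝ) * (3 * t * Cconst k t r t) ^ (2 * t) := by
  have hδ0 := pos_of_div_le hδ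
  have hk1 : (1 : ℝ) ≤ k := mod_cast hk
  have hr1 : (1 : ℝ) ≤ r + 1 := le_add_of_nonneg_left (Nat.cast_nonneg r)
  have ht1 : (1 : ℝ) ≤ 3 * t := mod_cast (by lia : 1 ≤ 3 * t)
  have hC1 : (4 : ℝ) ≤ Cconst k t r 1 := mod_cast four_le_Cconst_one hk (by lia)
  have hCt : (1 : ℝ) ≤ Cconst k t r t := mod_cast Cconst_pos hk (by lia) t
  have hbase : 2 * k * (r + 1) / δ ≤ 10 ^ 5 / 3 * (k * (r + 1) ^ 2) := by
    rw [div_le_iff₀ (by positivity)] at hδ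
    rw [div_le_iff₀ hδ0]
    have := mul_le_mul_of_nonneg_left hδ (by positivity : (0 : ℝ) ≤ k * (r + 1))
    linarith
  have hcube : (2 * k * (r + 1) / δ) ^ 3 ≤ 3 * t * Cconst k t r t := calc
    (2 * k * (r + 1) / δ) ^ 3 ≤ (10 ^ 5 / 3 * ((k : ℝ) * (r + 1) ^ 2)) ^ 3 := by gcongr
    _ = 10 ^ 15 / 27 * ((k : ℝ) ^ 3 * (r + 1) ^ 6) := by ring
    _ ≤ 10 ^ 14 * ((k : ℝ) ^ 4 * (r + 1) ^ 14) := by gcongr <;> norm_num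
    _ = 10 ^ 14 * ((k : ℝ) ^ 2 * (r + 1) ^ 7) ^ 2 := by ring
    _ ≤ (Cconst k t r t : ℝ) := mod_cast le_Cconst_self hk ht
    _ ≤ 3 * t * Cconst k t r t := le_mul_of_one_le_left (by positivity) ht1
  calc 4 * (2 * k * (r + 1) / δ) ^ (3 * t + 6) = 4 * ((2 * k * (r + 1) / δ) ^ 3) ^ (t + 2) := by
        rw [← pow_mul, show 3 * (t + 2) = 3 * t + 6 by ring]
    _ ≤ Cconst k t r 1 * (3 * t * Cconst k t r t) ^ (t + 2) := by gcongr
    _ ≤ _ := by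
        gcongr
        · exact one_le_mul_of_one_le_of_one_le ht1 hCt
        · lia

end Constants

theorem stmt13_general {n k t r : ℕ} {δ : ℝ} {F : Finset (Finset ℕ)} (hk : 0 < k) (ht : 0 < t)
    (hδ0 : 0 < δ) (hδ1 : δ ≤ 1) (hn : 4 * (2 * k * (r + 1) / δ) ^ (3 * t + 6) ≤ n)
    (hF : F ⊆ (Icc 1 n).powersetCard k)
    (hcard : (#F : ℝ) = ∑ i ∈ Icc t (t + r - 1), ((n - i).choose (k - t) : ℝ) +
      δ * ((n - (t + r)).choose (k - t) : ℝ))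
    (hopt : IsIntOptimal n k F) (hcores : #(fullCores n k t F) ≤ max r 1) :
    ∃ U ⊆ Icc 1 n, #U ≤ t * (r + 1) ∧ ∀ A ∈ F, t ≤ #(A ∩ U) := by
  have hnsum := add_add_le_of_four_mul_pow_le hk hδ0 hδ1 hn
  rcases lt_trichotomy t k with htk | rfl | hkt
  · rw [sum_Icc_choose_eq_sum_starSize ht, add_comm t r, ← Nat.sub_sub] at hcard
    rcases le_or_gt #(fullCores n k t F) r with hr | hr
    · exact hopt.exists_cover_of_card_fullCores_le hF ht htk hδ0 hδ1 hn hcard hr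
    obtain rfl : r = 0 := by lia
    obtain ⟨Y, hY⟩ := card_pos.1 hr
    have hle : #F ≤ starSize n k t := by
      have hle' := mul_le_of_le_one_left (Nat.cast_nonneg (α := ℝ) ((n - t).choose (k - t))) hδ1
      rw [starSize, ← Nat.cast_le (α := ℝ), hcard]
      simpa using hle'
    simpa using exists_cover_of_mem_fullCores hY htk.le hle
  · exact exists_cover_of_card_le hF ((card_le_card (subset_fullCores_self hF)).trans (by lia))
  · rw [card_fullCores_of_lt hkt] at hcores
    exact absurd hcores (lt_choose_of_add_lt ht (by lia)).not_ge

/-- **Lemma.** If an optimal family `F` (of the size in the main theorem, `t ≥ 2`) contains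
at most one full `t`-star, then `F` has a `t`-cover of size at most `t(4r+5)`. -/
theorem stmt13 (k r t n : ℕ) (hk : 2 ≤ k) (ht : 2 ≤ t)
    (hn : Cconst k t r 1 * (3 * t * Cconst k t r t) ^ (2 * t) ≤ n)
    (δ : ℝ)
    (hδ : (60 * (k : ℝ) ^ 2 * ((r : ℝ) + 1) ^ 6 * (t : ℝ) ^ 4 / (Cconst k t r 1 : ℝ) ≤ δ ∧
           δ ≤ 1 - 60 * (k : ℝ) ^ 2 * ((r : ℝ) + 1) ^ 6 * (t : ℝ) ^ 4 / (Cconst k t r 1 : ℝ)) ∨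
          δ = 1)
    (F : Finset (Finset ℕ)) (hF : F ⊆ (Icc 1 n).powersetCard k)
    (hcard : (F.card : ℝ) =
      (∑ i ∈ Icc t (t + r - 1), ((n - i).choose (k - t) : ℝ)) +
        δ * ((n - (t + r)).choose (k - t) : ℝ))
    (hopt : ∀ G ⊆ (Icc 1 n).powersetCard k, G.card = F.card → totalInt G ≤ totalInt F)
    (hatmostone : ∀ Y1 Y2 : Finset ℕ, Y1 ∈ (Icc 1 n).powersetCard t →
      Y2 ∈ (Icc 1 n).powersetCard t → fullStar n k Y1 ⊆ F → fullStar n k Y2 ⊆ F → Y1 = Y2) :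
    ∃ U ⊆ Icc 1 n, U.card ≤ t * (4 * r + 5) ∧ ∀ A ∈ F, t ≤ (A ∩ U).card := by
  obtain ⟨hδ0, hδ1⟩ := div_le_and_le_one_of_Cconst (by lia) (by lia) hδ
  obtain ⟨U, hUn, hU, hcover⟩ := stmt13_general (by lia) (by lia) (pos_of_div_le hδ0) hδ1
    ((four_mul_pow_le_Cconst_mul_pow (by lia) ht hδ0).trans (mod_cast hn)) hF hcard hopt
    ((card_fullCores_le_one hatmostone).trans (le_max_right r 1))
  exact ⟨U, hUn, hU.trans (Nat.mul_le_mul_left t (by lia)), hcover⟩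
end
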